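/- arXiv:1111.4319 — 3 statements merged into one kernel-verified Lean document; each statement's English description precedes it below -/
import Mathlib

section
/- Let n and k be integers with k ≥ 3 and n ≥ 2k. Suppose S is a q-covering design C_2(n−k+2, k, 3) (a finite set of k-dimensional subspaces of F_2^{n−k+2} covering all 3-dimensional subspaces), U_0 is an (n−k)-dimensional subspace of F_2^{n−k+2}, and U_1, U_2, U_3 are (n−k+1)-dimensional subspaces of F_2^{n−k+2} with U_i ∩ U_j = U_0 for all 1 ≤ i < j ≤ 3. For i = 0,1,2,3 let c_i be the number of elements X ∈ S with X ⊆ U_i, and assume c_1 ≤ c_2 ≤ c_3. Then 𝒞_2(n, k, 3) ≤ 2^{3(n−k)} + [k,2]_2 · (|S| − c_1 − c_2 − c_3 + 2c_0) + (2^k−1)·(c_1 − c_0) + 𝒞_2(n−k, k, 3), where [k,2]_2 = (2^k−1)(2^{k−1}−1)/3 is a Gaussian binomial coefficient. -/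
open Module

/-- `coveringNumber F n k r` is the minimum number of `k`-dimensional `F`-linear subspaces
of `F^n` needed so that every `r`-dimensional subspace is contained in at least one of them. -/
noncomputable def coveringNumber (F : Type) [Field F] (n k r : ℕ) : ℕ :=
  sInf { m : ℕ | ∃ S : Finset (Submodule F (Fin n → F)),
    S.card = m ∧
    (∀ X ∈ S, finrank F X = k) ∧
    (∀ Y : Submodule F (Fin n → F), finrank F Y = r → ∃ X ∈ S, Y ≤ X) }


theorem exists_extend {V : Type} [AddCommGroup V] [Module (ZMod 2) V] [FiniteDimensional (ZMod 2) V]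
    (Y : Submodule (ZMod 2) V) (d : ℕ) (h1 : finrank (ZMod 2) Y ≤ d)
    (h2 : d ≤ finrank (ZMod 2) V) : ∃ X : Submodule (ZMod 2) V, Y ≤ X ∧ finrank (ZMod 2) X = d := by
  induction d, h1 using Nat.le_induction with
  | base => exact ⟨Y, le_rfl, rfl⟩
  | succ d hd ih =>
    obtain ⟨X, hX, hXd⟩ := ih (by omega)
    have hlt : X < ⊤ := by
      rw [lt_top_iff_ne_top]; rintro rfl
      rw [finrank_top] at hXd; omega
    obtain ⟨v, -, hv⟩ := SetLike.exists_of_lt hlt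
    refine ⟨X ⊔ Submodule.span (ZMod 2) {v}, hX.trans le_sup_left, ?_⟩
    have hv0 : v ≠ 0 := by rintro rfl; exact hv X.zero_mem
    have h := Submodule.finrank_sup_add_finrank_inf_eq X (Submodule.span (ZMod 2) {v})
    rw [finrank_span_singleton hv0] at h
    have : X ⊓ Submodule.span (ZMod 2) {v} = ⊥ := by
      rw [← disjoint_iff]
      exact (Submodule.disjoint_span_singleton' hv0).2 hv
    rw [this, finrank_bot] at h
    omega

theorem exists_emb {V W : Type} [AddCommGroup V] [Module (ZMod 2) V] [FiniteDimensional (ZMod 2) V]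
    [AddCommGroup W] [Module (ZMod 2) W] [FiniteDimensional (ZMod 2) W]
    (h : finrank (ZMod 2) V ≤ finrank (ZMod 2) W) :
    ∃ f : V →ₗ[ZMod 2] W, Function.Injective f := by
  obtain ⟨X, -, hX⟩ := exists_extend (⊥ : Submodule (ZMod 2) W) _ (by simp) h
  let e := LinearEquiv.ofFinrankEq V X hX.symm
  exact ⟨X.subtype ∘ₗ e.toLinearMap, X.injective_subtype.comp e.injective⟩

theorem finrank_map_inj {V W : Type} [AddCommGroup V] [Module (ZMod 2) V]
    [AddCommGroup W] [Module (ZMod 2) W] (f : V →ₗ[ZMod 2] W) (hf : Function.Injective f)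
    (X : Submodule (ZMod 2) V) : finrank (ZMod 2) (X.map f) = finrank (ZMod 2) X :=
  (Submodule.equivMapOfInjective f hf X).finrank_eq.symm

theorem finrank_map_ker {V W : Type} [AddCommGroup V] [Module (ZMod 2) V]
    [FiniteDimensional (ZMod 2) V]
    [AddCommGroup W] [Module (ZMod 2) W] (f : V →ₗ[ZMod 2] W) (X : Submodule (ZMod 2) V) :
    finrank (ZMod 2) (X.map f) + finrank (ZMod 2) (X ⊓ LinearMap.ker f : Submodule (ZMod 2) V)
      = finrank (ZMod 2) X := by
  have h := LinearMap.finrank_range_add_finrank_ker (f.domRestrict X)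
  rw [LinearMap.range_domRestrict] at h
  rw [← h, LinearMap.ker_domRestrict]
  congr 1
  rw [← finrank_map_inj X.subtype X.injective_subtype ((LinearMap.ker f).comap X.subtype),
    Submodule.map_comap_subtype]

theorem covering_le {V : Type} [AddCommGroup V] [Module (ZMod 2) V]
    [FiniteDimensional (ZMod 2) V] (n k r : ℕ) (hV : finrank (ZMod 2) V = n)
    (T : Finset (Submodule (ZMod 2) V)) (h1 : ∀ X ∈ T, finrank (ZMod 2) X = k)
    (h2 : ∀ Y : Submodule (ZMod 2) V, finrank (ZMod 2) Y = r → ∃ X ∈ T, Y ≤ X) :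
    coveringNumber (ZMod 2) n k r ≤ T.card := by
  classical
  let e : V ≃ₗ[ZMod 2] (Fin n → ZMod 2) := LinearEquiv.ofFinrankEq _ _ (by simp [hV])
  refine (Nat.sInf_le ?_).trans (Finset.card_image_le (s := T)
    (f := fun X => X.map e.toLinearMap))
  refine ⟨_, rfl, ?_, ?_⟩
  · intro X hX
    obtain ⟨X', hX', rfl⟩ := Finset.mem_image.1 hX
    rw [finrank_map_inj _ e.injective, h1 _ hX']
  · intro Y hY
    obtain ⟨X, hX, hYX⟩ := h2 (Y.map e.symm.toLinearMap) (by rw [finrank_map_inj _ e.symm.injective, hY])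
    refine ⟨_, Finset.mem_image_of_mem _ hX, ?_⟩
    intro y hy
    exact ⟨e.symm y, hYX ⟨y, hy, rfl⟩, by simp⟩

theorem exists_cover {V : Type} [AddCommGroup V] [Module (ZMod 2) V]
    [FiniteDimensional (ZMod 2) V] (n k r : ℕ) (hV : finrank (ZMod 2) V = n) (hrk : r ≤ k)
    (hkn : k ≤ n) :
    ∃ T : Finset (Submodule (ZMod 2) V), T.card ≤ coveringNumber (ZMod 2) n k r ∧
     (∀ X ∈ T, finrank (ZMod 2) X = k) ∧
    (∀ Y : Submodule (ZMod 2) V, finrank (ZMod 2) Y = r → ∃ X ∈ T, Y ≤ X) := by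
  classical
  let e : (Fin n → ZMod 2) ≃ₗ[ZMod 2] V := LinearEquiv.ofFinrankEq _ _ (by simp [hV])
  have hne : { m : ℕ | ∃ S : Finset (Submodule (ZMod 2) (Fin n → (ZMod 2))),
    S.card = m ∧
    (∀ X ∈ S, finrank (ZMod 2) X = k) ∧
    (∀ Y : Submodule (ZMod 2) (Fin n → (ZMod 2)), finrank (ZMod 2) Y = r → ∃ X ∈ S, Y ≤ X) }.Nonempty := by
    have : Fintype (Submodule (ZMod 2) (Fin n → (ZMod 2))) := Fintype.ofFinite _
    refine ⟨_, Finset.univ.filter (fun X => finrank (ZMod 2) X = k), rfl, by simp, ?_⟩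
    intro Y hY
    obtain ⟨X, h1, h2⟩ := exists_extend Y k (by omega) (by simpa using hkn)
    exact ⟨X, by simpa using h2, h1⟩
  obtain ⟨S, hS, h1, h2⟩ := Nat.sInf_mem hne
  refine ⟨S.image (fun X => X.map e.toLinearMap), Finset.card_image_le.trans hS.le, ?_, ?_⟩
  · intro X hX
    obtain ⟨X', hX', rfl⟩ := Finset.mem_image.1 hX
    rw [finrank_map_inj _ e.injective, h1 _ hX']
  · intro Y hY
    obtain ⟨X, hX, hYX⟩ := h2 (Y.map e.symm.toLinearMap) (by rw [finrank_map_inj _ e.symm.injective, hY])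
    refine ⟨_, Finset.mem_image_of_mem _ hX, ?_⟩
    intro y hy
    exact ⟨e.symm y, hYX ⟨y, hy, rfl⟩, by simp⟩

theorem exists_functional {A : Type} [AddCommGroup A] [Module (ZMod 2) A]
    [FiniteDimensional (ZMod 2) A] (U : Submodule (ZMod 2) A)
    (h : finrank (ZMod 2) A = finrank (ZMod 2) U + 1) :
    ∃ f : A →ₗ[ZMod 2] ZMod 2, LinearMap.ker f = U := by
  have hlt : U < ⊤ := by
    rw [lt_top_iff_ne_top]; rintro rfl
    rw [finrank_top] at h; omega
  obtain ⟨f, hf, hU⟩ := Submodule.exists_le_ker_of_lt_top U hlt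
  refine ⟨f, (Submodule.eq_of_le_of_finrank_le hU ?_).symm⟩
  have h1 := LinearMap.finrank_range_add_finrank_ker f
  have : finrank (ZMod 2) (LinearMap.range f) ≠ 0 := by
    rw [Ne, Submodule.finrank_eq_zero, LinearMap.range_eq_bot]; exact hf
  omega

theorem exists_phi (m : ℕ) {A K E : Type} [AddCommGroup A] [Module (ZMod 2) A]
    [FiniteDimensional (ZMod 2) A] [AddCommGroup K] [Module (ZMod 2) K]
    [FiniteDimensional (ZMod 2) K] [AddCommGroup E] [Module (ZMod 2) E]
    (U0 U1 U2 : Submodule (ZMod 2) A) (h0 : finrank (ZMod 2) U0 = m)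
    (h1 : finrank (ZMod 2) U1 = m + 1) (h2 : finrank (ZMod 2) U2 = m + 1)
    (h12 : U1 ⊓ U2 = U0) (hA : finrank (ZMod 2) A = m + 2) (hK : finrank (ZMod 2) K = m)
    (x y : E) (hxy : LinearIndependent (ZMod 2) ![x, y]) :
    ∃ φ : A →ₗ[ZMod 2] K × E, Function.Injective φ ∧ (∀ a, a ∈ U0 ↔ (φ a).2 = 0) ∧
      (∀ a, a ∈ U1 ↔ (φ a).2 ∈ Submodule.span (ZMod 2) {x}) ∧
      (∀ v : K × E, v.2 ∈ Submodule.span (ZMod 2) {x, y} → v ∈ LinearMap.range φ) := by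
  rw [LinearIndependent.pair_iff] at hxy
  obtain ⟨f2, hf2⟩ := exists_functional U1 (by omega)
  obtain ⟨f1, hf1⟩ := exists_functional U2 (by omega)
  obtain ⟨r, hr⟩ := LinearMap.exists_leftInverse_of_injective U0.subtype (by simp)
  let g : U0 ≃ₗ[ZMod 2] K := LinearEquiv.ofFinrankEq _ _ (by omega)
  let ψ : A →ₗ[ZMod 2] K × (ZMod 2 × ZMod 2) := (g.toLinearMap ∘ₗ r).prod (f1.prod f2)
  have hψ : ∀ a, ψ a = (g (r a), f1 a, f2 a) := fun a => rfl
  have m1 : ∀ a, a ∈ U1 ↔ f2 a = 0 := fun a => by rw [← hf2]; simp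
  have m2 : ∀ a, a ∈ U2 ↔ f1 a = 0 := fun a => by rw [← hf1]; simp
  have m0 : ∀ a, a ∈ U0 ↔ f1 a = 0 ∧ f2 a = 0 := fun a => by
    rw [← h12, Submodule.mem_inf, m1, m2, and_comm]
  have hinj : Function.Injective ψ := by
    rw [injective_iff_map_eq_zero]
    intro a ha
    rw [hψ] at ha
    simp only [Prod.mk_eq_zero, LinearEquiv.map_eq_zero_iff] at ha
    have hm := (m0 a).2 ha.2
    have := LinearMap.congr_fun hr ⟨a, hm⟩
    simp only [LinearMap.comp_apply, Submodule.subtype_apply, LinearMap.id_apply, ha.1] at this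
    exact (congrArg Subtype.val this).symm
  have hsurj : Function.Surjective ψ :=
    (LinearMap.injective_iff_surjective_of_finrank_eq_finrank (by simp [hK, hA])).1 hinj
  let s : (ZMod 2 × ZMod 2) →ₗ[ZMod 2] E :=
    (LinearMap.toSpanSingleton (ZMod 2) E x).coprod (LinearMap.toSpanSingleton (ZMod 2) E y)
  have hs : ∀ c, s c = c.1 • x + c.2 • y := fun c => by simp [s]
  let φ : A →ₗ[ZMod 2] K × E := (LinearMap.id.prodMap s) ∘ₗ ψ
  have hφ : ∀ a, φ a = (g (r a), f1 a • x + f2 a • y) := fun a => by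
    simp [φ, hψ, hs]
  have k0 : ∀ a, a ∈ U0 ↔ (φ a).2 = 0 := by
    intro a
    rw [m0, hφ]
    constructor
    · rintro ⟨h, h'⟩; simp [h, h']
    · intro h; exact hxy _ _ h
  refine ⟨φ, ?_, k0, ?_, ?_⟩
  · rw [injective_iff_map_eq_zero]
    intro a ha
    apply hinj
    have := (m0 a).1 ((k0 a).2 (by rw [ha]; rfl))
    rw [hφ] at ha
    rw [map_zero, hψ, this.1, this.2, (Prod.mk_eq_zero.1 ha).1]
    rfl
  · intro a
    rw [m1, hφ, Submodule.mem_span_singleton]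
    constructor
    · intro h; exact ⟨f1 a, by simp [h]⟩
    · rintro ⟨c, hc⟩
      refine (hxy (f1 a - c) (f2 a) ?_).2
      rw [sub_smul, hc]; simp
  · intro v hv
    obtain ⟨c, d, hcd⟩ := Submodule.mem_span_pair.1 hv
    obtain ⟨a, ha⟩ := hsurj (v.1, c, d)
    refine ⟨a, ?_⟩
    simp [φ, ha, hs, hcd]

noncomputable def gab {K : Type} [Field K] [CharP K 2] [Module (ZMod 2) K] (a : K × K × K) :
    K →ₗ[ZMod 2] K :=
  AddMonoidHom.toZModLinearMap 2
    (AddMonoidHom.mk' (fun z : K => a.1 * z + a.2.1 * z ^ 2 + a.2.2 * z ^ 4) (by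
      intro x y
      have h2 : (x + y) ^ 2 = x ^ 2 + y ^ 2 := add_pow_char x y 2
      have h4 : (x + y) ^ 4 = x ^ 4 + y ^ 4 := by
        rw [show 4 = 2 * 2 from rfl, pow_mul, h2, add_pow_char, ← pow_mul, ← pow_mul]
      rw [h2, h4]; ring))

theorem gab_apply {K : Type} [Field K] [CharP K 2] [Module (ZMod 2) K] (a : K × K × K) (z : K) :
    gab a z = a.1 * z + a.2.1 * z ^ 2 + a.2.2 * z ^ 4 := rfl

theorem mrd {K E : Type} [Field K] [CharP K 2] [Algebra (ZMod 2) K]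
    [FiniteDimensional (ZMod 2) K] [AddCommGroup E] [Module (ZMod 2) E]
    [FiniteDimensional (ZMod 2) E]
    (ι : E →ₗ[ZMod 2] K) (hι : Function.Injective ι)
    (Y : Submodule (ZMod 2) (K × E)) (hY : finrank (ZMod 2) Y = 3)
    (hinj : ∀ v ∈ Y, v.2 = 0 → v = 0) :
    ∃ a : K × K × K, ∀ v ∈ Y, v.1 = gab a (ι v.2) := by
  let Φ : (K × K × K) →ₗ[ZMod 2] (Y →ₗ[ZMod 2] K) :=
    { toFun := fun a => gab a ∘ₗ ι ∘ₗ LinearMap.snd (ZMod 2) K E ∘ₗ Y.subtype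
      map_add' := by
        intro a b; ext v; simp [gab_apply]; ring
      map_smul' := by
        intro c a; ext v; simp [gab_apply, smul_add] }
  have hΦ : Function.Injective Φ := by
    rw [injective_iff_map_eq_zero]
    intro a ha
    have hev : ∀ v : Y, gab a (ι v.1.2) = 0 := fun v => LinearMap.congr_fun ha v
    let p : Polynomial K := Polynomial.C a.1 * Polynomial.X + Polynomial.C a.2.1 * Polynomial.X ^ 2
      + Polynomial.C a.2.2 * Polynomial.X ^ 4
    have : Finite K := Module.finite_of_finite (ZMod 2)
    have : Finite E := Module.finite_of_finite (ZMod 2)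
    have : Fintype Y := Fintype.ofFinite _
    have hcard : Fintype.card Y = 8 := by
      rw [Module.card_eq_pow_finrank (K := ZMod 2), hY]; rfl
    have hp : p = 0 := by
      apply Polynomial.eq_zero_of_natDegree_lt_card_of_eval_eq_zero p (f := fun v : Y => ι v.1.2)
      · intro v w hvw
        have h := hι hvw
        have := hinj _ (v - w).2 (by simp [h])
        exact sub_eq_zero.1 (Subtype.ext this)
      · intro v
        have := hev v
        rw [gab_apply] at this
        simpa [p] using this
      · rw [hcard]
        have : p.natDegree ≤ 4 := by
          simp only [p]; compute_degree
        omega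
    have c1 := congrArg (fun q => Polynomial.coeff q 1) hp
    have c2 := congrArg (fun q => Polynomial.coeff q 2) hp
    have c4 := congrArg (fun q => Polynomial.coeff q 4) hp
    simp [p, Polynomial.coeff_X_pow] at c1 c2 c4
    ext <;> simp [c1, c2, c4]
  have hs : Function.Surjective Φ := by
    refine (LinearMap.injective_iff_surjective_of_finrank_eq_finrank ?_).1 hΦ
    rw [Module.finrank_linearMap, hY]
    simp only [Module.finrank_prod]; ring
  obtain ⟨a, ha⟩ := hs (LinearMap.fst (ZMod 2) K E ∘ₗ Y.subtype)
  exact ⟨a, fun v hv => (LinearMap.congr_fun ha ⟨v, hv⟩).symm⟩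

theorem exists_alpha (E : Type) [Field E] [Fintype E] (h : 8 ≤ Fintype.card E) :
    ∃ α : E, α ^ 4 ≠ α := by
  by_contra! hc
  have : (Polynomial.X ^ 4 - Polynomial.X : Polynomial E) = 0 := by
    apply Polynomial.eq_zero_of_natDegree_lt_card_of_eval_eq_zero _ (f := fun v : E => v)
    · exact fun _ _ h => h
    · intro v; simp [hc]
    · have : (Polynomial.X ^ 4 - Polynomial.X : Polynomial E).natDegree ≤ 4 := by compute_degree
      omega
  have c := congrArg (fun q => Polynomial.coeff q 4) this
  simp [Polynomial.coeff_X] at c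

theorem zmod2_cases (s : ZMod 2) : s = 0 ∨ s = 1 := by
  revert s; decide

theorem alpha_indep {E : Type} [Field E] [CharP E 2] [Algebra (ZMod 2) E] (α : E)
    (hα : α ^ 4 ≠ α) (x : E) (hx : x ≠ 0) : LinearIndependent (ZMod 2) ![x, α * x] := by
  have two : (2 : E) = 0 := CharTwo.two_eq_zero
  rw [LinearIndependent.pair_iff]
  intro s t h
  rcases zmod2_cases s with rfl | rfl <;> rcases zmod2_cases t with rfl | rfl
  · exact ⟨rfl, rfl⟩
  · exfalso
    simp only [zero_smul, one_smul, zero_add, mul_eq_zero, hx, or_false] at h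
    exact hα (by rw [h]; ring)
  · simp [hx] at h
  · exfalso
    rw [one_smul, one_smul] at h
    have : (1 + α) * x = 0 := by linear_combination h
    have h' := (mul_eq_zero.1 this).resolve_right hx
    apply hα
    have : α = 1 := by linear_combination h' - two
    rw [this]; ring

theorem alpha_inj {E : Type} [Field E] [CharP E 2] [Algebra (ZMod 2) E] (α : E)
    (hα : α ^ 4 ≠ α) (x y : E) (hy : y ≠ 0)
    (h : Submodule.span (ZMod 2) {x, α * x} = Submodule.span (ZMod 2) {y, α * y}) : x = y := by
  have two : (2 : E) = 0 := CharTwo.two_eq_zero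
  have h1 : y ∈ Submodule.span (ZMod 2) {x, α * x} := by
    rw [h]; exact Submodule.subset_span (by simp)
  have h2 : α * y ∈ Submodule.span (ZMod 2) {x, α * x} := by
    rw [h]; exact Submodule.subset_span (by simp)
  obtain ⟨s, t, h1⟩ := Submodule.mem_span_pair.1 h1
  obtain ⟨s', t', h2⟩ := Submodule.mem_span_pair.1 h2
  have hx : x ≠ 0 := by
    rintro rfl; simp at h1; exact hy h1.symm
  have key : ∀ c : E, c * x = 0 → c = 0 := fun c hc => (mul_eq_zero.1 hc).resolve_right hx
  rcases zmod2_cases t with rfl | rfl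
  · rcases zmod2_cases s with rfl | rfl
    · simp at h1; exact absurd h1.symm hy
    · simpa using h1
  · exfalso
    apply hα
    rcases zmod2_cases s with rfl | rfl <;> rcases zmod2_cases s' with rfl | rfl <;>
      rcases zmod2_cases t' with rfl | rfl <;>
      simp only [zero_smul, one_smul, zero_add, add_zero] at h1 h2 <;> subst h1
    · have := key (α ^ 2) (by linear_combination -h2)
      grind
    · have := key (α ^ 2 - α) (by linear_combination -h2)
      grind
    · have := key (α ^ 2 - 1) (by linear_combination -h2)
      have : (α - 1) ^ 2 = 0 := by linear_combination this + (1 - α) * two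
      have := pow_eq_zero_iff (two_ne_zero) |>.1 this
      grind
    · have := key (α ^ 2 - 1 - α) (by linear_combination -h2)
      linear_combination (α ^ 2 + 2 + α) * this + (1+α) * two
    · have := key (α ^ 2 + α) (by linear_combination -h2)
      have : α ^ 2 = α := by linear_combination this - α * two
      grind
    · have := key (α ^ 2) (by linear_combination -h2)
      grind
    · have := key (α ^ 2 + α - 1) (by linear_combination -h2)
      have : α ^ 2 - 1 - α = 0 := by linear_combination this - α * two
      linear_combination (α ^ 2 + 2 + α) * this + (1+α) * two
    · have := key (α ^ 2 - 1) (by linear_combination -h2)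
      have : (α - 1) ^ 2 = 0 := by linear_combination this + (1 - α) * two
      have := pow_eq_zero_iff (two_ne_zero) |>.1 this
      grind

theorem exists_basis2 {E : Type} [AddCommGroup E] [Module (ZMod 2) E]
    (L : Submodule (ZMod 2) E) (hL : finrank (ZMod 2) L = 2) :
    ∃ x y : E, LinearIndependent (ZMod 2) ![x, y] ∧ Submodule.span (ZMod 2) {x, y} = L := by
  have : FiniteDimensional (ZMod 2) L := Module.finite_of_finrank_pos (by omega)
  let b := Module.finBasisOfFinrankEq (ZMod 2) L hL
  have hli : LinearIndependent (ZMod 2) (L.subtype ∘ b) := b.linearIndependent.map' _ (by simp)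
  have hfun : (L.subtype ∘ b) = ![(b 0 : E), (b 1 : E)] := by
    ext i; fin_cases i <;> rfl
  refine ⟨b 0, b 1, hfun ▸ hli, ?_⟩
  have : ({(b 0 : E), (b 1 : E)} : Set E) = L.subtype '' Set.range b := by
    rw [← Set.range_comp, hfun]; simp [Matrix.range_cons, Set.pair_comm]
  rw [this, ← Submodule.map_span, b.span_eq, Submodule.map_top, Submodule.range_subtype]

theorem finrank_pair {E : Type} [AddCommGroup E] [Module (ZMod 2) E] (x y : E)
    (h : LinearIndependent (ZMod 2) ![x, y]) :
    finrank (ZMod 2) (Submodule.span (ZMod 2) {x, y}) = 2 := by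
  have := finrank_span_eq_card h
  have e : Set.range ![x, y] = {x, y} := by simp [Matrix.range_cons, Set.pair_comm]
  rw [e] at this
  simpa using this

theorem card_lines {E : Type} [AddCommGroup E] [Module (ZMod 2) E] [Fintype E] [DecidableEq E]
    (s : Finset (Submodule (ZMod 2) E)) (hs : ∀ L ∈ s, finrank (ZMod 2) L = 2) :
    6 * s.card ≤ (Fintype.card E - 1) * (Fintype.card E - 2) := by
  classical
  let P : Submodule (ZMod 2) E → Finset E := fun L => Finset.univ.filter (fun x => x ∈ L ∧ x ≠ 0)
  have hP : ∀ L ∈ s, (P L).card = 3 := by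
    intro L hL
    have h4 : (Finset.univ.filter (fun x => x ∈ L)).card = 4 := by
      rw [← Fintype.card_subtype]
      have := Module.card_eq_pow_finrank (K := ZMod 2) (V := L)
      rw [hs L hL] at this
      exact this
    have : P L = (Finset.univ.filter (fun x => x ∈ L)).erase 0 := by
      ext x; simp [P, and_comm]
    rw [this, Finset.card_erase_of_mem (by simp), h4]
  have hdisj : (s : Set (Submodule (ZMod 2) E)).PairwiseDisjoint (fun L => (P L).offDiag) := by
    intro L hL M hM hLM
    rw [Function.onFun, Finset.disjoint_left]
    rintro ⟨x, y⟩ h1 h2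
    simp only [Finset.mem_offDiag, P, Finset.mem_filter, Finset.mem_univ, true_and] at h1 h2
    apply hLM
    have hli : LinearIndependent (ZMod 2) ![x, y] := by
      rw [LinearIndependent.pair_iff]
      intro a b hab
      rcases zmod2_cases a with rfl | rfl <;> rcases zmod2_cases b with rfl | rfl
      · exact ⟨rfl, rfl⟩
      · simp at hab; exact absurd hab h1.2.1.2
      · simp at hab; exact absurd hab h1.1.2
      · rw [one_smul, one_smul] at hab
        exfalso
        apply h1.2.2
        have h2 : y + y = 0 := by
          rw [← one_smul (ZMod 2) y, ← add_smul, show (1 + 1 : ZMod 2) = 0 from rfl, zero_smul]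
        exact add_right_cancel (hab.trans h2.symm)
    have hfr := finrank_pair x y hli
    have hle : ∀ N ∈ s, x ∈ N → y ∈ N → Submodule.span (ZMod 2) {x, y} = N := by
      intro N hN hx hy
      refine Submodule.eq_of_le_of_finrank_le ?_ (by rw [hfr, hs N hN])
      rw [Submodule.span_le]
      rintro z (rfl | rfl) <;> assumption
    rw [← hle L hL h1.1.1 h1.2.1.1, ← hle M hM h2.1.1 h2.2.1.1]
  have hsum : (s.biUnion (fun L => (P L).offDiag)).card = 6 * s.card := by
    rw [Finset.card_biUnion hdisj, Finset.sum_congr rfl (g := fun _ => 6), Finset.sum_const,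
      smul_eq_mul, mul_comm]
    intro L hL
    rw [Finset.offDiag_card, hP L hL]
  have hbig : ((Finset.univ.erase (0 : E)).offDiag).card
      = (Fintype.card E - 1) * (Fintype.card E - 2) := by
    rw [Finset.offDiag_card, Finset.card_erase_of_mem (Finset.mem_univ _), Finset.card_univ,
      ← Nat.mul_sub_one]
    rfl
  rw [← hsum, ← hbig]
  apply Finset.card_le_card
  intro p hp
  simp only [Finset.mem_biUnion, Finset.mem_offDiag, P, Finset.mem_filter, Finset.mem_univ,
    true_and] at hp
  obtain ⟨L, hL, h1, h2, h3⟩ := hp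
  simp [h1.2, h2.2, h3]

theorem card_types {A : Type} [AddCommGroup A] [Module (ZMod 2) A]
    (S : Finset (Submodule (ZMod 2) A)) (U : Fin 4 → Submodule (ZMod 2) A)
    (hUij : ∀ i j : Fin 4, i ≠ 0 → j ≠ 0 → i ≠ j → U i ⊓ U j = U 0) (c : Fin 4 → ℕ)
    (hc : ∀ i : Fin 4,
      c i = {X : Submodule (ZMod 2) A | X ∈ S ∧ X ≤ U i}.ncard) [DecidableEq (Submodule (ZMod 2) A)]
      [DecidableLE (Submodule (ZMod 2) A)] :
    (S.filter (fun X => ¬ X ≤ U 1 ∧ ¬ X ≤ U 2 ∧ ¬ X ≤ U 3)).card + c 1 + c 2 + c 3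
      = S.card + 2 * c 0 ∧
    (S.filter (fun X => X ≤ U 1 ∧ ¬ X ≤ U 0)).card + c 0 = c 1 := by
  have hc' : ∀ i, c i = (S.filter (fun X => X ≤ U i)).card := by
    intro i
    rw [hc, ← Set.ncard_coe_finset]; congr 1; ext X; simp
  have e12 : ∀ X : Submodule (ZMod 2) A, X ≤ U 0 ↔ X ≤ U 1 ∧ X ≤ U 2 := fun X => by
    rw [← hUij 1 2 (by decide) (by decide) (by decide), le_inf_iff]
  have e13 : ∀ X : Submodule (ZMod 2) A, X ≤ U 0 ↔ X ≤ U 1 ∧ X ≤ U 3 := fun X => by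
    rw [← hUij 1 3 (by decide) (by decide) (by decide), le_inf_iff]
  have e23 : ∀ X : Submodule (ZMod 2) A, X ≤ U 0 ↔ X ≤ U 2 ∧ X ≤ U 3 := fun X => by
    rw [← hUij 2 3 (by decide) (by decide) (by decide), le_inf_iff]
  simp only [hc', Finset.card_filter]
  rw [Finset.card_eq_sum_ones, Finset.mul_sum]
  simp only [← Finset.sum_add_distrib]
  constructor
  · refine Finset.sum_congr rfl fun X _ => ?_
    have := e12 X; have := e13 X; have := e23 X
    by_cases h1 : X ≤ U 1 <;> by_cases h2 : X ≤ U 2 <;> by_cases h3 : X ≤ U 3 <;>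
      by_cases h0 : X ≤ U 0 <;> simp_all
  · refine Finset.sum_congr rfl fun X _ => ?_
    have := e12 X
    by_cases h1 : X ≤ U 1 <;> by_cases h2 : X ≤ U 2 <;>
      by_cases h0 : X ≤ U 0 <;> simp_all

theorem map_comap_of_le {A V : Type} [AddCommGroup A] [Module (ZMod 2) A]
    [AddCommGroup V] [Module (ZMod 2) V] (φ : A →ₗ[ZMod 2] V) (hφ : Function.Injective φ)
    (Y : Submodule (ZMod 2) V) (hY : ∀ v ∈ Y, v ∈ LinearMap.range φ) :
    (Y.comap φ).map φ = Y ∧ finrank (ZMod 2) (Y.comap φ) = finrank (ZMod 2) Y := by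
  have h : (Y.comap φ).map φ = Y := Submodule.map_comap_eq_self hY
  exact ⟨h, by rw [← finrank_map_inj φ hφ, h]⟩

theorem core {A K E : Type} [AddCommGroup A] [Module (ZMod 2) A] [FiniteDimensional (ZMod 2) A]
    [Field K] [CharP K 2] [Algebra (ZMod 2) K] [FiniteDimensional (ZMod 2) K] [Fintype K]
    [Field E] [CharP E 2] [Algebra (ZMod 2) E] [FiniteDimensional (ZMod 2) E] [Fintype E]
    (m k : ℕ) (hk : 3 ≤ k) (hkm : k ≤ m) (hA : finrank (ZMod 2) A = m + 2)
    (hK : finrank (ZMod 2) K = m) (hE : finrank (ZMod 2) E = k)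
    (S : Finset (Submodule (ZMod 2) A))
    (hdim : ∀ X ∈ S, finrank (ZMod 2) X = k)
    (hcov : ∀ Y : Submodule (ZMod 2) A, finrank (ZMod 2) Y = 3 → ∃ X ∈ S, Y ≤ X)
    (U : Fin 4 → Submodule (ZMod 2) A)
    (hU0 : finrank (ZMod 2) (U 0) = m)
    (hUi : ∀ i : Fin 4, i ≠ 0 → finrank (ZMod 2) (U i) = m + 1)
    (hUij : ∀ i j : Fin 4, i ≠ 0 → j ≠ 0 → i ≠ j → U i ⊓ U j = U 0)
    (S' S1 : Finset (Submodule (ZMod 2) A))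
    (hS' : ∀ X ∈ S, ¬ X ≤ U 1 → ¬ X ≤ U 2 → ¬ X ≤ U 3 → X ∈ S') (hS'S : S' ⊆ S)
    (hS1 : ∀ X ∈ S, X ≤ U 1 → ¬ X ≤ U 0 → X ∈ S1) (hS1S : S1 ⊆ S) :
    ∃ l : ℕ, 6 * l ≤ (2 ^ k - 1) * (2 ^ k - 2) ∧
      coveringNumber (ZMod 2) (m + k) k 3 ≤ 2 ^ (3 * m) + l * S'.card + (2 ^ k - 1) * S1.card
        + coveringNumber (ZMod 2) m k 3 := by
  classical
  have cK : Fintype.card K = 2 ^ m := by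
    rw [Module.card_eq_pow_finrank (K := ZMod 2), hK]; rfl
  have cE : Fintype.card E = 2 ^ k := by
    rw [Module.card_eq_pow_finrank (K := ZMod 2), hE]; rfl
  obtain ⟨α, hα⟩ := exists_alpha E (by
    rw [cE]; exact (Nat.pow_le_pow_right (by norm_num) hk : 2 ^ 3 ≤ 2 ^ k))
  obtain ⟨ι, hι⟩ := exists_emb (V := E) (W := K) (by omega)
  obtain ⟨T0, hT0c, hT0d, hT0⟩ := exists_cover (V := K) m k 3 hK hk hkm
  have hU0le : ∀ i, i ≠ 0 → U 0 ≤ U i := by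
    intro i hi
    by_cases h1 : i = 1
    · rw [h1, ← hUij 1 2 (by decide) (by decide) (by decide)]; exact inf_le_left
    · rw [← hUij i 1 hi (by decide) h1]; exact inf_le_left
  -- the embeddings attached to the lines
  have hφ : ∀ L : Submodule (ZMod 2) E, ∃ φ : A →ₗ[ZMod 2] K × E, finrank (ZMod 2) L = 2 →
      Function.Injective φ ∧ (∀ a, a ∈ U 0 ↔ (φ a).2 = 0) ∧
      (∀ v : K × E, v.2 ∈ L → v ∈ LinearMap.range φ) ∧
      (∀ x : E, x ≠ 0 → Submodule.span (ZMod 2) {x, α * x} = L →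
        ∀ a, a ∈ U 1 ↔ (φ a).2 ∈ Submodule.span (ZMod 2) {x}) := by
    intro L
    by_cases hL : finrank (ZMod 2) L = 2
    swap
    · exact ⟨0, fun h => absurd h hL⟩
    have key := fun (x y : E) hxy => exists_phi m (K := K) (U 0) (U 1) (U 2) hU0
      (hUi 1 (by decide)) (hUi 2 (by decide)) (hUij 1 2 (by decide) (by decide) (by decide))
      hA hK x y hxy
    by_cases hx : ∃ x : E, x ≠ 0 ∧ Submodule.span (ZMod 2) {x, α * x} = L
    · obtain ⟨x, hx, hxL⟩ := hx
      obtain ⟨φ, h1, h2, h3, h4⟩ := key x (α * x) (alpha_indep α hα x hx)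
      refine ⟨φ, fun _ => ⟨h1, h2, ?_, ?_⟩⟩
      · rw [← hxL]; exact h4
      · intro x' hx' hxL'
        have : x = x' := alpha_inj α hα x x' hx' (hxL.trans hxL'.symm)
        rw [← this]; exact h3
    · obtain ⟨x, y, hxy, hL'⟩ := exists_basis2 L hL
      obtain ⟨φ, h1, h2, h3, h4⟩ := key x y hxy
      refine ⟨φ, fun _ => ⟨h1, h2, ?_, ?_⟩⟩
      · rw [← hL']; exact h4
      · intro x' hx' hxL'
        exact absurd ⟨x', hx', hxL'⟩ hx
  choose φ hφ using hφ
  have : Fintype (Submodule (ZMod 2) E) := Fintype.ofFinite _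
  let lines : Finset (Submodule (ZMod 2) E) :=
    Finset.univ.filter (fun L => finrank (ZMod 2) L = 2)
  have hlines : ∀ L, L ∈ lines ↔ finrank (ZMod 2) L = 2 := by simp [lines]
  have hlx : ∀ x : E, x ≠ 0 → finrank (ZMod 2) (Submodule.span (ZMod 2) {x, α * x}) = 2 :=
    fun x hx => finrank_pair _ _ (alpha_indep α hα x hx)
  let B1 : Finset (Submodule (ZMod 2) (K × E)) :=
    (Finset.univ : Finset (K × K × K)).image
      (fun a => LinearMap.range ((gab a ∘ₗ ι).prod LinearMap.id))
  let B2 : Finset (Submodule (ZMod 2) (K × E)) :=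
    (lines ×ˢ S').image (fun p => p.2.map (φ p.1))
  let B3 : Finset (Submodule (ZMod 2) (K × E)) :=
    ((Finset.univ.erase (0 : E)) ×ˢ S1).image
      (fun p => p.2.map (φ (Submodule.span (ZMod 2) {p.1, α * p.1})))
  let B4 : Finset (Submodule (ZMod 2) (K × E)) :=
    T0.image (fun X => X.map (LinearMap.inl (ZMod 2) K E))
  refine ⟨lines.card, ?_, ?_⟩
  · have := card_lines lines (fun L hL => (hlines L).1 hL)
    rwa [cE] at this
  have hcard : (B1 ∪ B2 ∪ B3 ∪ B4).card ≤ 2 ^ (3 * m) + lines.card * S'.card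
      + (2 ^ k - 1) * S1.card + coveringNumber (ZMod 2) m k 3 := by
    have b1 : B1.card ≤ 2 ^ (3 * m) := by
      refine Finset.card_image_le.trans ?_
      rw [Finset.card_univ, Fintype.card_prod, Fintype.card_prod, cK]
      apply le_of_eq; ring
    have b2 : B2.card ≤ lines.card * S'.card := by
      refine Finset.card_image_le.trans ?_
      rw [Finset.card_product]
    have b3 : B3.card ≤ (2 ^ k - 1) * S1.card := by
      refine Finset.card_image_le.trans ?_
      rw [Finset.card_product, Finset.card_erase_of_mem (Finset.mem_univ _), Finset.card_univ, cE]
    have b4 : B4.card ≤ coveringNumber (ZMod 2) m k 3 := Finset.card_image_le.trans hT0c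
    have u1 := Finset.card_union_le (B1 ∪ B2 ∪ B3) B4
    have u2 := Finset.card_union_le (B1 ∪ B2) B3
    have u3 := Finset.card_union_le B1 B2
    omega
  refine le_trans (covering_le (V := K × E) (m + k) k 3 ?_ (B1 ∪ B2 ∪ B3 ∪ B4) ?_ ?_) hcard
  · rw [Module.finrank_prod, hK, hE]
  · intro X hX
    simp only [Finset.mem_union] at hX
    rcases hX with ((hX | hX) | hX) | hX
    · obtain ⟨a, -, rfl⟩ := Finset.mem_image.1 hX
      rw [LinearMap.finrank_range_of_inj, hE]
      intro x y hxy
      exact congrArg Prod.snd hxy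
    · obtain ⟨⟨L, X⟩, hp, rfl⟩ := Finset.mem_image.1 hX
      obtain ⟨hL, hXS⟩ := Finset.mem_product.1 hp
      rw [finrank_map_inj _ (hφ L ((hlines L).1 hL)).1, hdim X (hS'S hXS)]
    · obtain ⟨⟨x, X⟩, hp, rfl⟩ := Finset.mem_image.1 hX
      obtain ⟨hx, hXS⟩ := Finset.mem_product.1 hp
      rw [finrank_map_inj _ (hφ _ (hlx x (Finset.ne_of_mem_erase hx))).1, hdim X (hS1S hXS)]
    · obtain ⟨X, hp, rfl⟩ := Finset.mem_image.1 hX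
      rw [finrank_map_inj _ LinearMap.inl_injective, hT0d X hp]
  · intro Y hY
    let P : Submodule (ZMod 2) E := Y.map (LinearMap.snd (ZMod 2) K E)
    have hP : ∀ v ∈ Y, v.2 ∈ P := fun v hv => ⟨v, hv, rfl⟩
    have hdimP := finrank_map_ker (LinearMap.snd (ZMod 2) K E) Y
    change finrank (ZMod 2) P + _ = _ at hdimP
    rw [hY] at hdimP
    have hcases : finrank (ZMod 2) P = 0 ∨ finrank (ZMod 2) P = 1 ∨ finrank (ZMod 2) P = 2 ∨
      finrank (ZMod 2) P = 3 := by omega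
    -- common analysis for the line blocks
    have common : ∀ L : Submodule (ZMod 2) E, finrank (ZMod 2) L = 2 → P ≤ L →
        ∃ X ∈ S, Y.comap (φ L) ≤ X ∧ Y ≤ X.map (φ L) := by
      intro L hL hPL
      obtain ⟨h1, h2, h3, h4⟩ := hφ L hL
      obtain ⟨e1, e2⟩ := map_comap_of_le (φ L) h1 Y (fun v hv => h3 v (hPL (hP v hv)))
      obtain ⟨X, hX, hYX⟩ := hcov (Y.comap (φ L)) (e2.trans hY)
      exact ⟨X, hX, hYX, e1 ▸ Submodule.map_mono hYX⟩
    have lift : ∀ L : Submodule (ZMod 2) E, finrank (ZMod 2) L = 2 → P ≤ L →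
        ∀ v ∈ Y, ∃ a ∈ Y.comap (φ L), φ L a = v := by
      intro L hL hPL v hv
      obtain ⟨a, ha⟩ := (hφ L hL).2.2.1 v (hPL (hP v hv))
      exact ⟨a, by simpa [ha] using hv, ha⟩
    rcases hcases with h | h | h | h
    · rw [Submodule.finrank_eq_zero] at h
      have hz : ∀ v ∈ Y, v.2 = 0 := fun v hv => by
        have := hP v hv
        rwa [h, Submodule.mem_bot] at this
      obtain ⟨e1, e2⟩ := map_comap_of_le (LinearMap.inl (ZMod 2) K E) LinearMap.inl_injective Y
        (fun v hv => ⟨v.1, by ext <;> simp [hz v hv]⟩)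
      obtain ⟨X, hX, hYX⟩ := hT0 _ (e2.trans hY)
      refine ⟨_, Finset.mem_union_right _ (Finset.mem_image_of_mem _ hX), ?_⟩
      rw [← e1]
      exact Submodule.map_mono hYX
    · obtain ⟨⟨x, hxP⟩, hx0, hxs⟩ := finrank_eq_one_iff'.1 h
      have hx : x ≠ 0 := fun h => hx0 (Subtype.ext h)
      have hPx : P ≤ Submodule.span (ZMod 2) {x} := by
        intro z hz
        obtain ⟨c, hc⟩ := hxs ⟨z, hz⟩
        exact Submodule.mem_span_singleton.2 ⟨c, congrArg Subtype.val hc⟩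
      have hPL : P ≤ Submodule.span (ZMod 2) {x, α * x} :=
        hPx.trans (Submodule.span_mono (by simp))
      have hL := hlx x hx
      obtain ⟨X, hXS, hX1, hX2⟩ := common _ hL hPL
      have hl := lift _ hL hPL
      obtain ⟨h1, h2, h3, h4⟩ := hφ _ hL
      have hYU1 : Y.comap (φ (Submodule.span (ZMod 2) {x, α * x})) ≤ U 1 := by
        intro a ha
        exact (h4 x hx rfl a).2 (hPx (hP _ ha))
      have hYU0 : ¬ Y.comap (φ (Submodule.span (ZMod 2) {x, α * x})) ≤ U 0 := by
        intro hle
        obtain ⟨v, hv, hvx⟩ := hxP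
        obtain ⟨a, ha, hav⟩ := hl v hv
        have := (h2 a).1 (hle ha)
        rw [hav] at this
        exact hx (hvx.symm.trans this)
      have hX0 : ¬ X ≤ U 0 := fun hh => hYU0 (hX1.trans hh)
      have hXi : ∀ i, i ≠ 0 → i ≠ 1 → ¬ X ≤ U i := by
        intro i hi hi1 hh
        apply hYU0
        rw [← hUij 1 i (by decide) hi hi1.symm]
        exact le_inf hYU1 (hX1.trans hh)
      by_cases hXU1 : X ≤ U 1
      · refine ⟨_, Finset.mem_union_left _ (Finset.mem_union_right _
          (Finset.mem_image_of_mem _ (a := (x, X)) ?_)), hX2⟩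
        exact Finset.mem_product.2 ⟨by simpa using hx, hS1 X hXS hXU1 hX0⟩
      · refine ⟨_, Finset.mem_union_left _ (Finset.mem_union_left _ (Finset.mem_union_right _
          (Finset.mem_image_of_mem _ (a := (Submodule.span (ZMod 2) {x, α * x}, X)) ?_))), hX2⟩
        exact Finset.mem_product.2 ⟨(hlines _).2 hL, hS' X hXS hXU1
          (hXi 2 (by decide) (by decide)) (hXi 3 (by decide) (by decide))⟩
    · obtain ⟨X, hXS, hX1, hX2⟩ := common P h le_rfl
      have hl := lift P h le_rfl
      obtain ⟨h1, h2, h3, h4⟩ := hφ P h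
      have hXi : ∀ i, i ≠ 0 → ¬ X ≤ U i := by
        intro i hi hh
        let ψ : A →ₗ[ZMod 2] E := LinearMap.snd (ZMod 2) K E ∘ₗ φ P
        have hker : LinearMap.ker ψ = U 0 := by
          ext a; rw [h2 a]; rfl
        have hf := finrank_map_ker ψ (U i)
        rw [hker, inf_eq_right.2 (hU0le i hi), hU0, hUi i hi] at hf
        have hPle : P ≤ (U i).map ψ := by
          rintro z ⟨v, hv, rfl⟩
          obtain ⟨a, ha, hav⟩ := hl v hv
          exact ⟨a, hh (hX1 ha), by simp [ψ, hav]⟩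
        have := Submodule.finrank_mono hPle
        omega
      refine ⟨_, Finset.mem_union_left _ (Finset.mem_union_left _ (Finset.mem_union_right _
          (Finset.mem_image_of_mem _ (a := (P, X)) ?_))), hX2⟩
      exact Finset.mem_product.2 ⟨(hlines _).2 h, hS' X hXS (hXi 1 (by decide))
          (hXi 2 (by decide)) (hXi 3 (by decide))⟩
    · have hbot : Y ⊓ LinearMap.ker (LinearMap.snd (ZMod 2) K E) = ⊥ := by
        rw [← Submodule.finrank_eq_zero (R := ZMod 2)]; omega
      obtain ⟨a, ha⟩ := mrd ι hι Y hY (fun v hv hv2 => by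
        have : v ∈ Y ⊓ LinearMap.ker (LinearMap.snd (ZMod 2) K E) := ⟨hv, hv2⟩
        rwa [hbot, Submodule.mem_bot] at this)
      refine ⟨_, Finset.mem_union_left _ (Finset.mem_union_left _ (Finset.mem_union_left _
          (Finset.mem_image_of_mem _ (Finset.mem_univ a)))), ?_⟩
      intro v hv
      exact ⟨v.2, by ext <;> simp [ha v hv]⟩

/-- The improved recursive construction from a lifted MRD code, for $r = 3$. -/
theorem improved_CMRD_k3 (n k : ℕ) (hk : 3 ≤ k) (hn : 2 * k ≤ n)
    (S : Finset (Submodule (ZMod 2) (Fin (n - k + 2) → ZMod 2)))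
    (hdim : ∀ X ∈ S, finrank (ZMod 2) X = k)
    (hcov : ∀ Y : Submodule (ZMod 2) (Fin (n - k + 2) → ZMod 2),
      finrank (ZMod 2) Y = 3 → ∃ X ∈ S, Y ≤ X)
    (U : Fin 4 → Submodule (ZMod 2) (Fin (n - k + 2) → ZMod 2))
    (hU0 : finrank (ZMod 2) (U 0) = n - k)
    (hUi : ∀ i : Fin 4, i ≠ 0 → finrank (ZMod 2) (U i) = n - k + 1)
    (hUij : ∀ i j : Fin 4, i ≠ 0 → j ≠ 0 → i ≠ j → U i ⊓ U j = U 0)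
    (c : Fin 4 → ℕ)
    (hc : ∀ i : Fin 4,
      c i = {X : Submodule (ZMod 2) (Fin (n - k + 2) → ZMod 2) | X ∈ S ∧ X ≤ U i}.ncard)
    (hc12 : c 1 ≤ c 2) (hc23 : c 2 ≤ c 3) :
    (coveringNumber (ZMod 2) n k 3 : ℚ) ≤
      2 ^ (3 * (n - k)) +
        ((2 ^ k - 1) * (2 ^ (k - 1) - 1) / 3 : ℚ) *
          ((S.card : ℚ) - c 1 - c 2 - c 3 + 2 * c 0) +
        (2 ^ k - 1) * ((c 1 : ℚ) - c 0) +
        (coveringNumber (ZMod 2) (n - k) k 3 : ℚ) := by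
  classical
  have hn0 : n - k ≠ 0 := by omega
  have hk0 : k ≠ 0 := by omega
  letI : Fintype (GaloisField 2 (n - k)) := Fintype.ofFinite _
  letI : Fintype (GaloisField 2 k) := Fintype.ofFinite _
  obtain ⟨hS', hS1⟩ := card_types S U hUij c hc
  obtain ⟨l, hl, hmain⟩ := core (K := GaloisField 2 (n - k)) (E := GaloisField 2 k) (n - k) k hk
    (by omega) (by simp) (GaloisField.finrank 2 hn0) (GaloisField.finrank 2 hk0) S hdim hcov U hU0
    hUi hUij (S.filter (fun X => ¬ X ≤ U 1 ∧ ¬ X ≤ U 2 ∧ ¬ X ≤ U 3))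
    (S.filter (fun X => X ≤ U 1 ∧ ¬ X ≤ U 0))
    (fun X hX h1 h2 h3 => Finset.mem_filter.2 ⟨hX, h1, h2, h3⟩) (Finset.filter_subset _ _)
    (fun X hX h1 h2 => Finset.mem_filter.2 ⟨hX, h1, h2⟩) (Finset.filter_subset _ _)
  rw [Nat.sub_add_cancel (by omega : k ≤ n)] at hmain
  generalize (S.filter (fun X => ¬ X ≤ U 1 ∧ ¬ X ≤ U 2 ∧ ¬ X ≤ U 3)).card = a at *
  generalize (S.filter (fun X => X ≤ U 1 ∧ ¬ X ≤ U 0)).card = b at *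
  have ha : (S.card : ℚ) - c 1 - c 2 - c 3 + 2 * c 0 = a := by
    have : ((a + c 1 + c 2 + c 3 : ℕ) : ℚ) = ((S.card + 2 * c 0 : ℕ) : ℚ) := by rw [hS']
    push_cast at this; linarith
  have hb : (c 1 : ℚ) - c 0 = b := by
    have : ((b + c 0 : ℕ) : ℚ) = ((c 1 : ℕ) : ℚ) := by rw [hS1]
    push_cast at this; linarith
  rw [ha, hb]
  obtain ⟨j, rfl⟩ : ∃ j, k = j + 1 := ⟨k - 1, by omega⟩
  have h2 : 2 ≤ 2 ^ (j + 1) := by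
    rw [pow_succ]; have := Nat.one_le_two_pow (n := j); omega
  have hlq : (l : ℚ) ≤ (2 ^ (j + 1) - 1) * (2 ^ (j + 1 - 1) - 1) / 3 := by
    have : ((6 * l : ℕ) : ℚ) ≤ (((2 ^ (j + 1) - 1) * (2 ^ (j + 1) - 2) : ℕ) : ℚ) := by
      exact_mod_cast hl
    rw [Nat.cast_mul, Nat.cast_mul, Nat.cast_sub h2, Nat.cast_sub (by omega)] at this
    push_cast at this
    rw [Nat.add_sub_cancel]
    rw [pow_succ] at *
    linarith
  have hmq : (coveringNumber (ZMod 2) n (j + 1) 3 : ℚ) ≤ ((2 ^ (3 * (n - (j + 1))) + l * a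
      + (2 ^ (j + 1) - 1) * b + coveringNumber (ZMod 2) (n - (j + 1)) (j + 1) 3 : ℕ) : ℚ) := by
    exact_mod_cast hmain
  rw [Nat.cast_add, Nat.cast_add, Nat.cast_add, Nat.cast_mul, Nat.cast_mul,
    Nat.cast_sub (by omega)] at hmq
  push_cast at hmq
  have := mul_le_mul_of_nonneg_right hlq (Nat.cast_nonneg (α := ℚ) a)
  linarith
end

section
/- For every integer n ≥ 3, 𝒞_2(2n+1, 3, 2) ≤ 2^{4n−4} + 7·(2^{2n−2}·(2^{2n−2}−1))/12 + Σ_{i=0}^{n−4} (2^{2i+4}·(2^{2i+4}−1))/4 (where the sum is empty for n = 3). -/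
open Module

lemma zmod_sq : ∀ c : ZMod 2, c ^ 2 = c := by decide

lemma solve_aux {K : Type} [Field K] (X Y w z : K) (hX : X ≠ 0) (hY : Y ≠ 0) (hXY : Y - X ≠ 0) :
    ∃ s t : K, s * X + t * X ^ 2 = w ∧ s * Y + t * Y ^ 2 = z := by
  refine ⟨(w * Y ^ 2 - z * X ^ 2) / (X * Y * (Y - X)), (z * X - w * Y) / (X * Y * (Y - X)), ?_, ?_⟩
  · field_simp
    ring
  · field_simp
    ring

/-- Gabidulin-type family of linear maps. -/
lemma mrd_s16 {A T : Type} [AddCommGroup A] [Module (ZMod 2) A] [AddCommGroup T] [Module (ZMod 2) T]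
    [FiniteDimensional (ZMod 2) A] [FiniteDimensional (ZMod 2) T]
    (hA : finrank (ZMod 2) A ≤ finrank (ZMod 2) T) (hT : finrank (ZMod 2) T ≠ 0) :
    ∃ S : Finset (A →ₗ[ZMod 2] T), S.card ≤ (2 ^ finrank (ZMod 2) T) ^ 2 ∧
      ∀ x y : A, x ≠ 0 → y ≠ 0 → x ≠ y → ∀ w z : T, ∃ f ∈ S, f x = w ∧ f y = z := by
  classical
  have : Fact (Nat.Prime 2) := ⟨Nat.prime_two⟩
  set d := finrank (ZMod 2) T with hd
  let K := GaloisField 2 d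
  have hK : finrank (ZMod 2) K = d := GaloisField.finrank 2 hT
  have : FiniteDimensional (ZMod 2) K := FiniteDimensional.of_finrank_pos (by omega)
  have : Finite K := Module.finite_of_finite (ZMod 2)
  have : Fintype K := Fintype.ofFinite K
  have e : K ≃ₗ[ZMod 2] T := LinearEquiv.ofFinrankEq _ _ hK
  obtain ⟨j, hj⟩ : ∃ j : A →ₗ[ZMod 2] K, Function.Injective j := by
    exact finrank_le_iff_exists_linearMap.mp (by rw [hK]; exact hA)
  let sq : K →ₗ[ZMod 2] K :=
    { toFun := fun x => x ^ 2
      map_add' := fun x y => CharTwo.add_sq x y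
      map_smul' := fun c x => by
        have : c ^ 2 = c := zmod_sq c
        simp only [RingHom.id_apply, smul_pow, this] }
  let g : K × K → (A →ₗ[ZMod 2] T) := fun st =>
    e.toLinearMap ∘ₗ (((LinearMap.mulLeft (ZMod 2) st.1) ∘ₗ j) +
      ((LinearMap.mulLeft (ZMod 2) st.2) ∘ₗ sq ∘ₗ j))
  have hg : ∀ s t x, g (s, t) x = e (s * j x + t * (j x) ^ 2) := fun s t x => rfl
  refine ⟨Finset.univ.image g, ?_, ?_⟩
  · refine Finset.card_image_le.trans ?_
    have : Fintype.card K = 2 ^ d := by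
      rw [← Nat.card_eq_fintype_card]; exact GaloisField.card 2 d hT
    simp [this]
    exact le_of_eq (by ring)
  · intro x y hx hy hxy w z
    have hx' : j x ≠ 0 := fun h => hx (hj (by simpa using h))
    have hy' : j y ≠ 0 := fun h => hy (hj (by simpa using h))
    have hxy' : j y - j x ≠ 0 := fun h => hxy (hj (sub_eq_zero.1 h).symm)
    obtain ⟨w, rfl⟩ := e.surjective w
    obtain ⟨z, rfl⟩ := e.surjective z
    obtain ⟨s, t, h1, h2⟩ := solve_aux (j x) (j y) w z hx' hy' hxy'
    exact ⟨g (s, t), Finset.mem_image_of_mem _ (Finset.mem_univ _),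
      by rw [hg, h1], by rw [hg, h2]⟩

/-- Enlarging a subspace to dimension 3. -/
lemma enlarge {V : Type} [AddCommGroup V] [Module (ZMod 2) V] [FiniteDimensional (ZMod 2) V]
    (r : ℕ) (hr : r ≤ finrank (ZMod 2) V) (X : Submodule (ZMod 2) V)
    (hX : finrank (ZMod 2) X ≤ r) :
    ∃ Y : Submodule (ZMod 2) V, X ≤ Y ∧ finrank (ZMod 2) Y = r := by
  obtain ⟨k, hk⟩ := Nat.exists_eq_add_of_le hX
  induction k generalizing X with
  | zero => exact ⟨X, le_rfl, by omega⟩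
  | succ k ih =>
    have hlt : X < ⊤ := by
      refine lt_of_le_of_ne le_top ?_
      rintro rfl
      rw [finrank_top] at hk; omega
    obtain ⟨v, -, hv⟩ := SetLike.exists_of_lt hlt
    have h1 : finrank (ZMod 2) (X ⊔ Submodule.span (ZMod 2) {v} : Submodule (ZMod 2) V) =
        finrank (ZMod 2) X + 1 := by
      have h2 := Submodule.finrank_add_le_finrank_add_finrank X (Submodule.span (ZMod 2) {v})
      have h3 := finrank_span_le_card (R := ZMod 2) ({v} : Set V)
      simp at h3
      have h4 : X < X ⊔ Submodule.span (ZMod 2) {v} := by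
        refine lt_of_le_of_ne le_sup_left ?_
        intro h
        apply hv
        rw [h]
        exact Submodule.mem_sup_right (Submodule.mem_span_singleton_self v)
      have := Submodule.finrank_lt_finrank_of_lt h4
      omega
    obtain ⟨Y, hY, hY'⟩ := ih (X ⊔ Submodule.span (ZMod 2) {v}) (by omega) (by omega)
    exact ⟨Y, le_sup_left.trans hY, hY'⟩

/-- Block through `(a, p)` with directions `L`. -/
def blk {A T : Type} [AddCommGroup A] [Module (ZMod 2) A] [AddCommGroup T] [Module (ZMod 2) T]
    (a : A) (d : T × Submodule (ZMod 2) T) : Submodule (ZMod 2) (A × T) :=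
  Submodule.span (ZMod 2) {(a, d.1)} ⊔ d.2.map (LinearMap.inr (ZMod 2) A T)

section
variable {A T : Type} [AddCommGroup A] [Module (ZMod 2) A] [AddCommGroup T] [Module (ZMod 2) T]

lemma blk_mem_zero (a : A) (d : T × Submodule (ZMod 2) T) {y : T} (hy : y ∈ d.2) :
    ((0 : A), y) ∈ blk a d :=
  Submodule.mem_sup_right ⟨y, hy, rfl⟩

lemma blk_mem_pt (a : A) (d : T × Submodule (ZMod 2) T) {x : T} (hx : x - d.1 ∈ d.2) :
    (a, x) ∈ blk a d := by
  have h : (a, x) = (a, d.1) + ((0 : A), x - d.1) := by simp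
  rw [h]
  exact add_mem (Submodule.mem_sup_left (Submodule.mem_span_singleton_self _))
    (blk_mem_zero a d hx)

lemma blk_finrank [FiniteDimensional (ZMod 2) A] [FiniteDimensional (ZMod 2) T]
    (a : A) (d : T × Submodule (ZMod 2) T) (hd : finrank (ZMod 2) d.2 ≤ 2) :
    finrank (ZMod 2) (blk a d) ≤ 3 := by
  have h2 := Submodule.finrank_add_le_finrank_add_finrank
    (Submodule.span (ZMod 2) {(a, d.1)}) (d.2.map (LinearMap.inr (ZMod 2) A T))
  have h3 := finrank_span_le_card (R := ZMod 2) ({(a, d.1)} : Set (A × T))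
  have h4 := Submodule.finrank_map_le (LinearMap.inr (ZMod 2) A T) d.2
  simp only [Set.toFinset_singleton, Finset.card_singleton] at h3
  unfold blk
  omega

/-- `D` is an affine design: any two points of `T` lie in a common affine block. -/
def AffCov (D : Finset (T × Submodule (ZMod 2) T)) : Prop :=
  (∀ d ∈ D, finrank (ZMod 2) d.2 ≤ 2) ∧
  ∀ x y : T, ∃ d ∈ D, x - d.1 ∈ d.2 ∧ y - d.1 ∈ d.2

lemma char_two_module (x : T) : x + x = 0 := by
  have h : (2 : ZMod 2) • x = 0 := by
    have : (2 : ZMod 2) = 0 := rfl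
    rw [this, zero_smul]
  rwa [two_smul] at h

/-- Blocks through `a` cover all pairs with projections in `{0, a}`, not both zero. -/
lemma blk_cover {D : Finset (T × Submodule (ZMod 2) T)} (hD : AffCov D) (a x y : A) (w z : T)
    (h : (x = a ∧ y = 0) ∨ (x = 0 ∧ y = a) ∨ (x = a ∧ y = a)) :
    ∃ d ∈ D, (x, w) ∈ blk a d ∧ (y, z) ∈ blk a d := by
  rcases h with ⟨rfl, rfl⟩ | ⟨rfl, rfl⟩ | ⟨rfl, rfl⟩
  · obtain ⟨d, hd, h1, h2⟩ := hD.2 w (w + z)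
    refine ⟨d, hd, blk_mem_pt _ d h1, blk_mem_zero _ d ?_⟩
    have := sub_mem h2 h1
    simpa using this
  · obtain ⟨d, hd, h1, h2⟩ := hD.2 z (z + w)
    refine ⟨d, hd, blk_mem_zero _ d ?_, blk_mem_pt _ d h1⟩
    have := sub_mem h2 h1
    simpa using this
  · obtain ⟨d, hd, h1, h2⟩ := hD.2 w z
    exact ⟨d, hd, blk_mem_pt _ d h1, blk_mem_pt _ d h2⟩

lemma cases_pair {A : Type} [AddCommGroup A] (x y : A) : (x = 0 ∧ y = 0) ∨ (x ≠ 0 ∧ y ≠ 0 ∧ x ≠ y) ∨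
    ∃ a : A, a ≠ 0 ∧ ((x = a ∧ y = 0) ∨ (x = 0 ∧ y = a) ∨ (x = a ∧ y = a)) := by
  by_cases hx : x = 0
  · by_cases hy : y = 0
    · exact Or.inl ⟨hx, hy⟩
    · exact Or.inr (Or.inr ⟨y, hy, Or.inr (Or.inl ⟨hx, rfl⟩)⟩)
  · by_cases hy : y = 0
    · exact Or.inr (Or.inr ⟨x, hx, Or.inl ⟨rfl, hy⟩⟩)
    · by_cases hxy : x = y
      · exact Or.inr (Or.inr ⟨x, hx, Or.inr (Or.inr ⟨rfl, hxy.symm⟩)⟩)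
      · exact Or.inr (Or.inl ⟨hx, hy, hxy⟩)

end

/-- The inductive package: seven affine designs of size at most `c` whose direction lines, together
with at most `e` further 3-spaces, cover all pairs of vectors. -/
def Pack (T : Type) [AddCommGroup T] [Module (ZMod 2) T] (c e : ℕ) : Prop :=
  ∃ (D : Fin 7 → Finset (T × Submodule (ZMod 2) T)) (E : Finset (Submodule (ZMod 2) T)),
    (∀ i, (D i).card ≤ c) ∧ E.card ≤ e ∧ (∀ i, AffCov (D i)) ∧
    (∀ X ∈ E, finrank (ZMod 2) X ≤ 3) ∧
    ∀ u v : T, (∃ i, ∃ d ∈ D i, u ∈ d.2 ∧ v ∈ d.2) ∨ ∃ X ∈ E, u ∈ X ∧ v ∈ X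

lemma Pack.transport {T T' : Type} [AddCommGroup T] [Module (ZMod 2) T] [AddCommGroup T']
    [Module (ZMod 2) T'] (φ : T ≃ₗ[ZMod 2] T') {c e : ℕ} (h : Pack T c e) : Pack T' c e := by
  classical
  obtain ⟨D, E, hc, he, hD, hE, hu⟩ := h
  have key : ∀ (L : Submodule (ZMod 2) T) (x : T'),
      x ∈ L.map φ.toLinearMap ↔ φ.symm x ∈ L := by
    intro L x
    constructor
    · rintro ⟨y, hy, rfl⟩
      simpa using hy
    · intro hx
      exact ⟨_, hx, by simp⟩
  have keyf : ∀ (L : Submodule (ZMod 2) T),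
      finrank (ZMod 2) (L.map φ.toLinearMap) = finrank (ZMod 2) L := fun L =>
    LinearEquiv.finrank_map_eq φ L
  refine ⟨fun i => (D i).image (fun d => (φ d.1, d.2.map φ.toLinearMap)),
    E.image (fun X => X.map φ.toLinearMap), fun i => Finset.card_image_le.trans (hc i),
    Finset.card_image_le.trans he, ?_, ?_, ?_⟩
  · intro i
    refine ⟨?_, ?_⟩
    · intro d hd
      obtain ⟨d, hd2, rfl⟩ := Finset.mem_image.1 hd
      rw [keyf]
      exact (hD i).1 d hd2
    · intro x y
      obtain ⟨d, hd, h1, h2⟩ := (hD i).2 (φ.symm x) (φ.symm y)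
      refine ⟨_, Finset.mem_image_of_mem _ hd, ?_, ?_⟩
      · rw [key]; simpa using h1
      · rw [key]; simpa using h2
  · intro X hX
    obtain ⟨X, hX2, rfl⟩ := Finset.mem_image.1 hX
    rw [keyf]
    exact hE X hX2
  · intro u v
    rcases hu (φ.symm u) (φ.symm v) with ⟨i, d, hd, h1, h2⟩ | ⟨X, hX, h1, h2⟩
    · exact Or.inl ⟨i, _, Finset.mem_image_of_mem _ hd, (key _ _).2 h1, (key _ _).2 h2⟩
    · exact Or.inr ⟨_, Finset.mem_image_of_mem _ hX, (key _ _).2 h1, (key _ _).2 h2⟩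

lemma Pack.step {T : Type} [AddCommGroup T] [Module (ZMod 2) T] [FiniteDimensional (ZMod 2) T]
    (hT : 3 ≤ finrank (ZMod 2) T) {c e : ℕ} (h : Pack T c e) :
    Pack ((ZMod 2 × ZMod 2) × T) ((2 ^ finrank (ZMod 2) T) ^ 2 + 4 * c) (e + 3 * c) := by
  classical
  obtain ⟨D, E, hc, he, hD, hE, hu⟩ := h
  obtain ⟨S, hS, hcov⟩ := mrd_s16 (A := ZMod 2 × (ZMod 2 × ZMod 2)) (T := T)
    (by simpa [Module.finrank_prod] using hT) (by omega)
  let B := ZMod 2 × ZMod 2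
  let gr : ((ZMod 2 × B) →ₗ[ZMod 2] T) → (B × T) × Submodule (ZMod 2) (B × T) := fun f =>
    ((0, f (1, 0)), LinearMap.range (LinearMap.prod LinearMap.id (f ∘ₗ LinearMap.inr _ _ _)))
  let up : B × (T × Submodule (ZMod 2) T) → (B × T) × Submodule (ZMod 2) (B × T) := fun q =>
    ((q.1, q.2.1), q.2.2.map (LinearMap.inr _ _ _))
  let nz : Finset B := {(0, 1), (1, 0), (1, 1)}
  have hnz : ∀ b : B, b ≠ 0 → b ∈ nz := by
    change ∀ b : ZMod 2 × ZMod 2, b ≠ 0 → b ∈ ({(0, 1), (1, 0), (1, 1)} : Finset (ZMod 2 × ZMod 2))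
    decide
  have hnzc : nz.card = 3 := rfl
  refine ⟨fun i => S.image gr ∪ ((Finset.univ : Finset B) ×ˢ D i).image up,
    E.image (fun X => X.map (LinearMap.inr _ _ _)) ∪ (nz ×ˢ D 0).image (fun q => blk q.1 q.2),
    ?_, ?_, ?_, ?_, ?_⟩
  · intro i
    refine (Finset.card_union_le _ _).trans (add_le_add (Finset.card_image_le.trans hS) ?_)
    refine Finset.card_image_le.trans ?_
    rw [Finset.card_product]
    exact Nat.mul_le_mul (le_of_eq (by rfl)) (hc i)
  · refine (Finset.card_union_le _ _).trans (add_le_add (Finset.card_image_le.trans he) ?_)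
    refine Finset.card_image_le.trans ?_
    rw [Finset.card_product, hnzc]
    exact Nat.mul_le_mul le_rfl (hc 0)
  · intro i
    refine ⟨?_, ?_⟩
    · intro d hd
      rcases Finset.mem_union.1 hd with hd | hd
      · obtain ⟨f, hf, rfl⟩ := Finset.mem_image.1 hd
        refine (LinearMap.finrank_range_le _).trans ?_
        simp [B, Module.finrank_prod]
      · obtain ⟨⟨b, d⟩, hd2, rfl⟩ := Finset.mem_image.1 hd
        exact (Submodule.finrank_map_le _ _).trans ((hD i).1 d (Finset.mem_product.1 hd2).2)
    · rintro ⟨b, x⟩ ⟨b', x'⟩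
      by_cases hb : b = b'
      · subst hb
        obtain ⟨d, hd, h1, h2⟩ := (hD i).2 x x'
        refine ⟨up (b, d), Finset.mem_union_right _ (Finset.mem_image_of_mem _
          (Finset.mem_product.2 ⟨Finset.mem_univ _, hd⟩)), ⟨_, h1, ?_⟩, ⟨_, h2, ?_⟩⟩ <;>
        simp [up]
      · obtain ⟨f, hf, h1, h2⟩ := hcov (1, b) (1, b') (by simp) (by simp) (by simpa using hb) x x'
        have hfl : ∀ b : B, f (0, b) = f (1, b) - f (1, 0) := by
          intro b
          rw [← map_sub]; simp
        refine ⟨gr f, Finset.mem_union_left _ (Finset.mem_image_of_mem _ hf), ⟨b, ?_⟩, ⟨b', ?_⟩⟩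
        · simp [gr, hfl, h1]
        · simp [gr, hfl, h2]
  · intro X hX
    rcases Finset.mem_union.1 hX with hX | hX
    · obtain ⟨X, hX2, rfl⟩ := Finset.mem_image.1 hX
      exact (Submodule.finrank_map_le _ _).trans (hE X hX2)
    · obtain ⟨⟨b, d⟩, hd, rfl⟩ := Finset.mem_image.1 hX
      exact blk_finrank _ _ ((hD 0).1 d (Finset.mem_product.1 hd).2)
  · rintro ⟨b, x⟩ ⟨b', x'⟩
    rcases cases_pair b b' with ⟨rfl, rfl⟩ | ⟨h1, h2, h3⟩ | ⟨a, ha, hab⟩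
    · rcases hu x x' with ⟨i, d, hd, h1, h2⟩ | ⟨X, hX, h1, h2⟩
      · exact Or.inl ⟨i, up (0, d), Finset.mem_union_right _ (Finset.mem_image_of_mem _
          (Finset.mem_product.2 ⟨Finset.mem_univ _, hd⟩)), ⟨_, h1, rfl⟩, ⟨_, h2, rfl⟩⟩
      · exact Or.inr ⟨_, Finset.mem_union_left _ (Finset.mem_image_of_mem _ hX),
          ⟨_, h1, rfl⟩, ⟨_, h2, rfl⟩⟩
    · obtain ⟨f, hf, h4, h5⟩ := hcov (0, b) (0, b') (by simpa using h1) (by simpa using h2)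
        (by simpa using h3) x x'
      refine Or.inl ⟨0, gr f, Finset.mem_union_left _ (Finset.mem_image_of_mem _ hf),
        ⟨b, ?_⟩, ⟨b', ?_⟩⟩
      · simp [h4]
      · simp [h5]
    · obtain ⟨d, hd, h1, h2⟩ := blk_cover (hD 0) a b b' x x' hab
      exact Or.inr ⟨blk a d, Finset.mem_union_right _ (Finset.mem_image.2
        ⟨(a, d), Finset.mem_product.2 ⟨hnz a ha, hd⟩, rfl⟩), h1, h2⟩

/-- A vector of `F_2^4` from the bits of a number. -/
def bv (m : ℕ) : ZMod 2 × ZMod 2 × ZMod 2 × ZMod 2 :=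
  (((m / 8 : ℕ) : ZMod 2), ((m / 4 : ℕ) : ZMod 2), ((m / 2 : ℕ) : ZMod 2), (m : ZMod 2))

/-- A packing of `PG(3,2)`: seven spreads of five lines, each line given by two points. -/
def packing : Fin 7 → Fin 5 → ℕ × ℕ :=
  ![![(1, 2), (4, 8), (5, 10), (6, 11), (7, 9)],
    ![(1, 4), (2, 8), (3, 13), (6, 9), (7, 11)],
    ![(1, 6), (2, 9), (3, 12), (4, 10), (5, 8)],
    ![(1, 8), (2, 12), (3, 5), (4, 11), (7, 10)],
    ![(1, 10), (2, 13), (3, 4), (5, 9), (6, 8)],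
    ![(1, 12), (2, 4), (3, 9), (5, 11), (7, 8)],
    ![(1, 14), (2, 5), (3, 8), (4, 9), (6, 10)]]

/-- The `r`-th point of the line with the given two generators. -/
def linePt (q : ℕ × ℕ) (r : Fin 4) : ZMod 2 × ZMod 2 × ZMod 2 × ZMod 2 :=
  ![0, bv q.1, bv q.2, bv q.1 + bv q.2] r

def lineSpan (q : ℕ × ℕ) : Submodule (ZMod 2) (ZMod 2 × ZMod 2 × ZMod 2 × ZMod 2) :=
  Submodule.span (ZMod 2) {bv q.1, bv q.2}

lemma linePt_mem (q : ℕ × ℕ) (r : Fin 4) : linePt q r ∈ lineSpan q := by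
  have h1 : bv q.1 ∈ lineSpan q := Submodule.subset_span (by simp)
  have h2 : bv q.2 ∈ lineSpan q := Submodule.subset_span (by simp)
  fin_cases r
  · exact zero_mem _
  · exact h1
  · exact h2
  · exact add_mem h1 h2

lemma packing_spread : ∀ (i : Fin 7) (z : ZMod 2 × ZMod 2 × ZMod 2 × ZMod 2),
    ∃ j : Fin 5, ∃ r : Fin 4, z = linePt (packing i j) r := by
  decide +kernel

lemma packing_compl : ∀ (i : Fin 7) (j : Fin 5) (z : ZMod 2 × ZMod 2 × ZMod 2 × ZMod 2),
    ∃ s r : Fin 4, z - linePt (packing i (j + 1)) s = linePt (packing i j) r := by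
  decide +kernel

lemma packing_cover : ∀ (u v : ZMod 2 × ZMod 2 × ZMod 2 × ZMod 2),
    ∃ (i : Fin 7) (j : Fin 5), (∃ r : Fin 4, u = linePt (packing i j) r) ∧
      ∃ r : Fin 4, v = linePt (packing i j) r := by
  decide +kernel

lemma pack_base : Pack (ZMod 2 × ZMod 2 × ZMod 2 × ZMod 2) 20 0 := by
  classical
  let g : Fin 7 → Fin 5 × Fin 4 → _ := fun i q =>
    (linePt (packing i (q.1 + 1)) q.2, lineSpan (packing i q.1))
  refine ⟨fun i => Finset.univ.image (g i), ∅, fun i => Finset.card_image_le.trans (by simp),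
    by simp, ?_, by simp, ?_⟩
  · intro i
    refine ⟨?_, ?_⟩
    · intro d hd
      obtain ⟨q, -, rfl⟩ := Finset.mem_image.1 hd
      refine (finrank_span_le_card _).trans ?_
      simp only [Set.toFinset_insert, Set.toFinset_singleton]
      exact Finset.card_le_two
    · intro x y
      obtain ⟨j, r, hr⟩ := packing_spread i (y - x)
      obtain ⟨s, t, ht⟩ := packing_compl i j x
      have h1 : x - linePt (packing i (j + 1)) s ∈ lineSpan (packing i j) := by
        rw [ht]; exact linePt_mem _ _
      have h2 : y - x ∈ lineSpan (packing i j) := by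
        rw [hr]; exact linePt_mem _ _
      refine ⟨g i (j, s), Finset.mem_image_of_mem _ (Finset.mem_univ _), h1, ?_⟩
      have := add_mem h2 h1
      simpa using this
  · intro u v
    obtain ⟨i, j, ⟨r, rfl⟩, ⟨s, rfl⟩⟩ := packing_cover u v
    exact Or.inl ⟨i, g i (j, 0), Finset.mem_image_of_mem _ (Finset.mem_univ _),
      linePt_mem _ _, linePt_mem _ _⟩

/-- Size of the affine designs on dimension `2 j + 4`. -/
def cN : ℕ → ℕ
  | 0 => 20
  | j + 1 => (2 ^ (2 * j + 4)) ^ 2 + 4 * cN j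

/-- Number of extra 3-spaces on dimension `2 j + 4`. -/
def eN : ℕ → ℕ
  | 0 => 0
  | j + 1 => eN j + 3 * cN j

lemma pack_all (j : ℕ) : Pack (Fin (2 * j + 4) → ZMod 2) (cN j) (eN j) := by
  induction j with
  | zero =>
    exact pack_base.transport (LinearEquiv.ofFinrankEq _ _ (by simp [Module.finrank_prod]))
  | succ j ih =>
    have h := Pack.step (by simp) ih
    rw [Module.finrank_fin_fun] at h
    refine h.transport (LinearEquiv.ofFinrankEq _ _ ?_)
    simp [Module.finrank_prod]
    omega

lemma cN_eq (j : ℕ) : (cN j : ℚ) = (2 : ℚ) ^ (2 * j + 4) * ((2 : ℚ) ^ (2 * j + 4) - 1) / 12 := by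
  induction j with
  | zero => norm_num [cN]
  | succ j ih =>
    have : (2 : ℚ) ^ (2 * (j + 1) + 4) = 4 * 2 ^ (2 * j + 4) := by ring
    rw [this]
    simp only [cN]
    push_cast
    rw [ih]
    ring

lemma eN_eq (j : ℕ) : (eN j : ℚ) = ∑ i ∈ Finset.range j,
    ((2 : ℚ) ^ (2 * i + 4) * ((2 : ℚ) ^ (2 * i + 4) - 1)) / 4 := by
  induction j with
  | zero => simp [eN]
  | succ j ih =>
    rw [Finset.sum_range_succ, ← ih]
    simp only [eN]
    push_cast
    rw [cN_eq]
    ring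

/-- Assemble the covering design. -/
lemma assemble {T : Type} [AddCommGroup T] [Module (ZMod 2) T] [FiniteDimensional (ZMod 2) T]
    (hT : 3 ≤ finrank (ZMod 2) T) {c e : ℕ} (h : Pack T c e) :
    ∃ S : Finset (Submodule (ZMod 2) ((ZMod 2 × ZMod 2 × ZMod 2) × T)),
      S.card ≤ (2 ^ finrank (ZMod 2) T) ^ 2 + 7 * c + e ∧
      (∀ X ∈ S, finrank (ZMod 2) X ≤ 3) ∧ ∀ u v, ∃ X ∈ S, u ∈ X ∧ v ∈ X := by
  classical
  obtain ⟨D, E, hc, he, hD, hE, hu⟩ := h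
  obtain ⟨S, hS, hcov⟩ := mrd_s16 (A := ZMod 2 × ZMod 2 × ZMod 2) (T := T)
    (by simpa [Module.finrank_prod] using hT) (by omega)
  let pt : Fin 7 → ZMod 2 × ZMod 2 × ZMod 2 :=
    ![(0, 0, 1), (0, 1, 0), (0, 1, 1), (1, 0, 0), (1, 0, 1), (1, 1, 0), (1, 1, 1)]
  have hpt : ∀ a, a ≠ 0 → ∃ i, pt i = a := by
    change ∀ a : ZMod 2 × ZMod 2 × ZMod 2, a ≠ 0 → ∃ i : Fin 7, (![(0, 0, 1), (0, 1, 0), (0, 1, 1),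
      (1, 0, 0), (1, 0, 1), (1, 1, 0), (1, 1, 1)] : Fin 7 → ZMod 2 × ZMod 2 × ZMod 2) i = a
    decide +kernel
  let gr : ((ZMod 2 × ZMod 2 × ZMod 2) →ₗ[ZMod 2] T) →
      Submodule (ZMod 2) ((ZMod 2 × ZMod 2 × ZMod 2) × T) := fun f =>
    LinearMap.range (LinearMap.prod LinearMap.id f)
  refine ⟨(S.image gr ∪ Finset.univ.biUnion (fun i : Fin 7 => (D i).image (blk (pt i)))) ∪
    E.image (fun X => X.map (LinearMap.inr _ _ _)), ?_, ?_, ?_⟩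
  · refine (Finset.card_union_le _ _).trans (add_le_add ?_ (Finset.card_image_le.trans he))
    refine (Finset.card_union_le _ _).trans (add_le_add (Finset.card_image_le.trans hS) ?_)
    have := Finset.card_biUnion_le_card_mul (Finset.univ : Finset (Fin 7))
      (fun i : Fin 7 => (D i).image (blk (pt i))) c
      (fun i _ => Finset.card_image_le.trans (hc i))
    simpa using this
  · intro X hX
    rcases Finset.mem_union.1 hX with hX | hX
    · rcases Finset.mem_union.1 hX with hX | hX
      · obtain ⟨f, hf, rfl⟩ := Finset.mem_image.1 hX
        refine (LinearMap.finrank_range_le _).trans ?_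
        simp [Module.finrank_prod]
      · obtain ⟨i, -, hX⟩ := Finset.mem_biUnion.1 hX
        obtain ⟨d, hd, rfl⟩ := Finset.mem_image.1 hX
        exact blk_finrank _ _ ((hD i).1 d hd)
    · obtain ⟨X, hX2, rfl⟩ := Finset.mem_image.1 hX
      exact (Submodule.finrank_map_le _ _).trans (hE X hX2)
  · rintro ⟨b, x⟩ ⟨b', x'⟩
    have hmem : ∀ i, ∀ d ∈ D i, blk (pt i) d ∈ (S.image gr ∪ Finset.univ.biUnion
        (fun i : Fin 7 => (D i).image (blk (pt i)))) ∪
        E.image (fun X => X.map (LinearMap.inr _ _ _)) := fun i d hd =>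
      Finset.mem_union_left _ (Finset.mem_union_right _ (Finset.mem_biUnion.2
        ⟨i, Finset.mem_univ _, Finset.mem_image_of_mem _ hd⟩))
    rcases cases_pair b b' with ⟨rfl, rfl⟩ | ⟨h1, h2, h3⟩ | ⟨a, ha, hab⟩
    · rcases hu x x' with ⟨i, d, hd, h1, h2⟩ | ⟨X, hX, h1, h2⟩
      · exact ⟨_, hmem i d hd, blk_mem_zero _ _ h1, blk_mem_zero _ _ h2⟩
      · exact ⟨_, Finset.mem_union_right _ (Finset.mem_image_of_mem _ hX),
          ⟨_, h1, rfl⟩, ⟨_, h2, rfl⟩⟩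
    · obtain ⟨f, hf, h4, h5⟩ := hcov b b' h1 h2 h3 x x'
      refine ⟨gr f, Finset.mem_union_left _ (Finset.mem_union_left _
        (Finset.mem_image_of_mem _ hf)), ⟨b, ?_⟩, ⟨b', ?_⟩⟩
      · simp [h4]
      · simp [h5]
    · obtain ⟨i, rfl⟩ := hpt a ha
      obtain ⟨d, hd, h1, h2⟩ := blk_cover (hD i) (pt i) b b' x x' hab
      exact ⟨_, hmem i d hd, h1, h2⟩

lemma coveringNumber_le {V : Type} [AddCommGroup V] [Module (ZMod 2) V] (n N : ℕ) (hn : 3 ≤ n)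
    (φ : V ≃ₗ[ZMod 2] (Fin n → ZMod 2)) (S : Finset (Submodule (ZMod 2) V)) (hS : S.card ≤ N)
    (h3 : ∀ X ∈ S, finrank (ZMod 2) X ≤ 3) (hc : ∀ u v, ∃ X ∈ S, u ∈ X ∧ v ∈ X) :
    coveringNumber (ZMod 2) n 3 2 ≤ N := by
  classical
  have hex : ∀ X : Submodule (ZMod 2) V, ∃ Y : Submodule (ZMod 2) (Fin n → ZMod 2),
      X ∈ S → X.map φ.toLinearMap ≤ Y ∧ finrank (ZMod 2) Y = 3 := by
    intro X
    by_cases hX : X ∈ S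
    · obtain ⟨Y, hY⟩ := enlarge 3 (by simpa using hn) (X.map φ.toLinearMap)
        ((LinearEquiv.finrank_map_eq φ X).le.trans (h3 X hX))
      exact ⟨Y, fun _ => hY⟩
    · exact ⟨⊥, fun h => absurd h hX⟩
  choose G hG using hex
  refine le_trans (Nat.sInf_le ⟨S.image G, rfl, ?_, ?_⟩) (Finset.card_image_le.trans hS)
  · intro X hX
    obtain ⟨X, hX2, rfl⟩ := Finset.mem_image.1 hX
    exact (hG X hX2).2
  · intro Y hY
    let b := Module.finBasisOfFinrankEq (ZMod 2) Y hY
    obtain ⟨X, hX, h0, h1⟩ := hc (φ.symm (b 0)) (φ.symm (b 1))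
    refine ⟨G X, Finset.mem_image_of_mem _ hX, ?_⟩
    have hb : ∀ i, ((b i : Y) : Fin n → ZMod 2) ∈ G X := by
      intro i
      apply (hG X hX).1
      fin_cases i
      · exact ⟨_, h0, by simp⟩
      · exact ⟨_, h1, by simp⟩
    intro y hy
    have := b.sum_repr ⟨y, hy⟩
    have h2 := congrArg (Subtype.val) this
    simp only [Submodule.coe_sum, Submodule.coe_smul] at h2
    rw [← h2]
    exact Submodule.sum_mem _ (fun i _ => Submodule.smul_mem _ _ (hb i))

/-- Upper bound on $\mathcal{C}_2(2n+1,3,2)$ from the iterated construction. -/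
theorem bound_2n1_3_2 (n : ℕ) (hn : 3 ≤ n) :
    (coveringNumber (ZMod 2) (2 * n + 1) 3 2 : ℚ) ≤
      2 ^ (4 * n - 4) +
        7 * ((2 : ℚ) ^ (2 * n - 2) * ((2 : ℚ) ^ (2 * n - 2) - 1)) / 12 +
        ∑ i ∈ Finset.range (n - 3),
          ((2 : ℚ) ^ (2 * i + 4) * ((2 : ℚ) ^ (2 * i + 4) - 1)) / 4 := by
  obtain ⟨j, rfl⟩ := Nat.exists_eq_add_of_le' hn
  obtain ⟨S, hS, h3, hc⟩ := assemble (by simp) (pack_all j)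
  rw [Module.finrank_fin_fun] at hS
  have h := coveringNumber_le (2 * (j + 3) + 1) _ (by omega)
    (LinearEquiv.ofFinrankEq _ _ (by simp [Module.finrank_prod]; omega)) S hS h3 hc
  have h' : (coveringNumber (ZMod 2) (2 * (j + 3) + 1) 3 2 : ℚ) ≤
      (((2 ^ (2 * j + 4)) ^ 2 + 7 * cN j + eN j : ℕ) : ℚ) := by exact_mod_cast h
  refine h'.trans (le_of_eq ?_)
  have e1 : 4 * (j + 3) - 4 = (2 * j + 4) * 2 := by omega
  have e2 : 2 * (j + 3) - 2 = 2 * j + 4 := by omega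
  have e3 : j + 3 - 3 = j := by omega
  rw [e1, e2, e3, pow_mul]
  push_cast
  rw [cN_eq, eN_eq]
  ring
end

section
/- 𝒞_2(10, 5, 3) ≤ 45230; that is, there exists a set of at most 45230 five-dimensional F_2-subspaces of F_2^{10} such that every three-dimensional F_2-subspace of F_2^{10} is contained in at least one of them. -/
open Module

/-- A subspace of dimension at most `k` extends to one of dimension exactly `k`. -/
theorem extend_subspace {F V : Type*} [Field F] [AddCommGroup V] [Module F V]
    [FiniteDimensional F V] (k : ℕ) (hk : k ≤ finrank F V) (d : ℕ) :
    ∀ W : Submodule F V, finrank F W + d = k → ∃ W' : Submodule F V, W ≤ W' ∧ finrank F W' = k := by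
  induction d with
  | zero => intro W h; exact ⟨W, le_rfl, by simpa using h⟩
  | succ d ih =>
    intro W h
    have hlt : finrank F W < finrank F V := by omega
    obtain ⟨v, hv⟩ : ∃ v, v ∉ W := by
      by_contra! hcon
      have : W = ⊤ := by ext x; simp [hcon x]
      rw [this, finrank_top] at hlt
      exact lt_irrefl _ hlt
    have hv0 : v ≠ 0 := by rintro rfl; exact hv W.zero_mem
    have h1 := Submodule.finrank_sup_add_finrank_inf_eq W (Submodule.span F {v})
    have h2 : W ⊓ Submodule.span F {v} = ⊥ := by
      rw [← disjoint_iff]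
      exact (Submodule.disjoint_span_singleton' hv0).2 hv
    rw [h2, finrank_bot, finrank_span_singleton hv0] at h1
    obtain ⟨W', hW', hf⟩ := ih (W ⊔ Submodule.span F {v}) (by omega)
    exact ⟨W', le_sup_left.trans hW', hf⟩

theorem finrank_single_le {V : Type*} [AddCommGroup V] [Module (ZMod 2) V] (v : V) :
    finrank (ZMod 2) (Submodule.span (ZMod 2) {v}) ≤ 1 := by
  by_cases hv : v = 0
  · rw [hv, Submodule.span_zero_singleton, finrank_bot]; exact Nat.zero_le _
  · rw [finrank_span_singleton hv]

/-- Completing a nonzero vector to a basis of a plane. -/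
theorem complete_pair {V : Type*} [AddCommGroup V] [Module (ZMod 2) V]
    [FiniteDimensional (ZMod 2) V] (hV : finrank (ZMod 2) V = 2) (a : V) (ha : a ≠ 0) :
    ∃ b : V, b ≠ 0 ∧ a ≠ b ∧ ∀ z, ∃ s t : ZMod 2, s • a + t • b = z := by
  have h1 := Submodule.finrank_quotient_add_finrank (Submodule.span (ZMod 2) {a})
  rw [finrank_span_singleton ha, hV] at h1
  obtain ⟨v, hv, hall⟩ := finrank_eq_one_iff'.1
    (show finrank (ZMod 2) (V ⧸ Submodule.span (ZMod 2) {a}) = 1 by omega)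
  obtain ⟨b, rfl⟩ := Submodule.mkQ_surjective _ v
  have hb : b ∉ Submodule.span (ZMod 2) {a} := fun h => hv (by simpa using h)
  refine ⟨b, ?_, ?_, fun z => ?_⟩
  · rintro rfl; exact hb (Submodule.zero_mem _)
  · rintro rfl; exact hb (Submodule.mem_span_singleton_self _)
  · obtain ⟨c, hc⟩ := hall (Submodule.mkQ _ z)
    rw [← map_smul, ← sub_eq_zero, ← map_sub, Submodule.mkQ_apply,
      Submodule.Quotient.mk_eq_zero, Submodule.mem_span_singleton] at hc
    obtain ⟨d, hd⟩ := hc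
    refine ⟨-d, c, ?_⟩
    rw [neg_smul, hd]; abel

/-- Reduction of the bound to an indexed family of subspaces of dimension at most `5`. -/
theorem bound_of_family {V I : Type*} [AddCommGroup V] [Module (ZMod 2) V]
    [FiniteDimensional (ZMod 2) V] (hV : finrank (ZMod 2) V = 10) [Fintype I]
    (N : ℕ) (hI : Fintype.card I ≤ N) (W : I → Submodule (ZMod 2) V)
    (hW : ∀ i, finrank (ZMod 2) (W i) ≤ 5)
    (hc : ∀ U : Submodule (ZMod 2) V, finrank (ZMod 2) U = 3 → ∃ i, U ≤ W i) :
    coveringNumber (ZMod 2) 10 5 3 ≤ N := by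
  classical
  have hext : ∀ i, ∃ W' : Submodule (ZMod 2) V, W i ≤ W' ∧ finrank (ZMod 2) W' = 5 := fun i =>
    extend_subspace 5 (by omega) (5 - finrank (ZMod 2) (W i)) (W i) (by have := hW i; omega)
  choose W' hWW' hW' using hext
  let e : V ≃ₗ[ZMod 2] (Fin 10 → ZMod 2) := LinearEquiv.ofFinrankEq _ _ (by simp [hV])
  let S : Finset (Submodule (ZMod 2) (Fin 10 → ZMod 2)) :=
    Finset.univ.image fun i => (W' i).map (e : V →ₗ[ZMod 2] (Fin 10 → ZMod 2))
  have hS : S.card ≤ N := Finset.card_image_le.trans (by simpa using hI)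
  refine le_trans (Nat.sInf_le ⟨S, rfl, ?_, ?_⟩) hS
  · intro X hX
    obtain ⟨i, -, rfl⟩ := Finset.mem_image.1 hX
    rw [LinearEquiv.finrank_map_eq e, hW']
  · intro Y hY
    obtain ⟨i, hi⟩ := hc (Y.map (e.symm : (Fin 10 → ZMod 2) →ₗ[ZMod 2] V))
      (by rw [LinearEquiv.finrank_map_eq e.symm, hY])
    refine ⟨_, Finset.mem_image.2 ⟨i, Finset.mem_univ _, rfl⟩, ?_⟩
    intro y hy
    exact ⟨e.symm y, hWW' i (hi ⟨y, hy, rfl⟩), by simp⟩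

/-- The five matrices whose kernels form a line spread of `F_2^4`. -/
def spreadMat : Fin 5 → Matrix (Fin 2) (Fin 4) (ZMod 2) :=
  ![!![0, 0, 1, 0; 0, 0, 0, 1], !![1, 0, 1, 0; 0, 1, 0, 1], !![0, 1, 1, 0; 1, 1, 0, 1],
    !![1, 1, 1, 0; 1, 0, 0, 1], !![1, 0, 0, 0; 0, 1, 0, 0]]

theorem spreadMat_surj : ∀ i, ∀ w : Fin 2 → ZMod 2, ∃ v, (spreadMat i).mulVec v = w := by
  decide

theorem spreadMat_cover : ∀ v : Fin 4 → ZMod 2, ∃ i, (spreadMat i).mulVec v = 0 := by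
  decide

section field

variable {K : Type*} [Field K] [Algebra (ZMod 2) K] [FiniteDimensional (ZMod 2) K]

theorem exists_spread (hK : finrank (ZMod 2) K = 5) (a : K) :
    ∃ h : Fin 5 → (K →ₗ[ZMod 2] (Fin 2 → ZMod 2)), (∀ i, Function.Surjective (h i)) ∧
      (∀ i, h i a = 0) ∧ ∀ v, ∃ i, h i v = 0 := by
  wlog ha : a ≠ 0 generalizing a
  · obtain ⟨h, h1, -, h3⟩ := this 1 one_ne_zero
    push Not at ha
    exact ⟨h, h1, by simp [ha], h3⟩
  have h1 := Submodule.finrank_quotient_add_finrank (Submodule.span (ZMod 2) {a})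
  rw [finrank_span_singleton ha, hK] at h1
  let e : (K ⧸ Submodule.span (ZMod 2) {a}) ≃ₗ[ZMod 2] (Fin 4 → ZMod 2) :=
    LinearEquiv.ofFinrankEq _ _ (by simp; omega)
  refine ⟨fun i => (spreadMat i).mulVecLin ∘ₗ e.toLinearMap ∘ₗ
    (Submodule.span (ZMod 2) {a}).mkQ, ?_, ?_, ?_⟩
  · intro i w
    obtain ⟨v, hv⟩ := spreadMat_surj i w
    obtain ⟨z, hz⟩ := Submodule.mkQ_surjective (Submodule.span (ZMod 2) {a}) (e.symm v)
    exact ⟨z, by simp [-Submodule.mkQ_apply, hz, hv]⟩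
  · intro i
    have : (Submodule.span (ZMod 2) {a}).mkQ a = 0 := by
      simp [Submodule.mem_span_singleton_self]
    simp [-Submodule.mkQ_apply, this]
  · intro v
    obtain ⟨i, hi⟩ := spreadMat_cover (e ((Submodule.span (ZMod 2) {a}).mkQ v))
    exact ⟨i, by simpa using hi⟩

/-- The linear map `x ↦ a x + b x^2 + c x^4`, linear in everything. -/
theorem exists_interpolation [CharP K 2] (hK : finrank (ZMod 2) K = 5)
    (U : Submodule (ZMod 2) (K × K)) (hU : finrank (ZMod 2) U = 3)
    (hd : ∀ w ∈ U, w.1 = 0 → w = 0) :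
    ∃ a b c : K, ∀ w ∈ U, w.2 = a * w.1 + b * w.1 ^ 2 + c * w.1 ^ 4 := by
  classical
  have hadd2 : ∀ x y : K, (x + y) ^ 2 = x ^ 2 + y ^ 2 := fun x y => add_pow_char x y 2
  have hadd4 : ∀ x y : K, (x + y) ^ 4 = x ^ 4 + y ^ 4 := fun x y => by
    have : ∀ z : K, z ^ 4 = (z ^ 2) ^ 2 := fun z => by ring
    rw [this, this x, this y, hadd2, hadd2]
  let ev : K × K × K → (U →ₗ[ZMod 2] K) := fun p => AddMonoidHom.toZModLinearMap 2
    { toFun := fun w => p.1 * w.1.1 + p.2.1 * w.1.1 ^ 2 + p.2.2 * w.1.1 ^ 4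
      map_zero' := by simp
      map_add' := fun x y => by
        simp only [Submodule.coe_add, Prod.fst_add, hadd2, hadd4]; ring }
  let Φ : (K × K × K) →ₗ[ZMod 2] (U →ₗ[ZMod 2] K) := AddMonoidHom.toZModLinearMap 2
    { toFun := ev
      map_zero' := by ext w; simp [ev]
      map_add' := fun p q => by
        ext w
        simp [ev]
        ring }
  have hΦ : ∀ p w, Φ p w = p.1 * w.1.1 + p.2.1 * w.1.1 ^ 2 + p.2.2 * w.1.1 ^ 4 := fun p w => rfl
  have hinj : Function.Injective Φ := by
    rw [injective_iff_map_eq_zero]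
    rintro ⟨a, b, c⟩ h0
    let P : Polynomial K := Polynomial.C a * Polynomial.X + Polynomial.C b * Polynomial.X ^ 2
      + Polynomial.C c * Polynomial.X ^ 4
    have hP : P = 0 := by
      have hfin : Finite U := Module.finite_of_finite (ZMod 2)
      have : Fintype U := Fintype.ofFinite U
      have hcard : Fintype.card U = 8 := by
        rw [Module.card_eq_pow_finrank (K := ZMod 2), hU]; simp
      refine Polynomial.eq_zero_of_natDegree_lt_card_of_eval_eq_zero P (f := fun w : U => w.1.1)
        ?_ ?_ ?_
      · intro x y hxy
        have := hd (x - y : U) (x - y).2 (by simpa [sub_eq_zero] using hxy)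
        rwa [ZeroMemClass.coe_eq_zero, sub_eq_zero] at this
      · intro w
        have := LinearMap.congr_fun h0 w
        rw [hΦ] at this
        simpa [P] using this
      · rw [hcard]
        have : P.natDegree ≤ 4 := by simp only [P]; compute_degree
        omega
    have h1 : P.coeff 1 = a := by simp [P, Polynomial.coeff_X, Polynomial.coeff_X_pow]
    have h2 : P.coeff 2 = b := by simp [P, Polynomial.coeff_X, Polynomial.coeff_X_pow]
    have h4 : P.coeff 4 = c := by simp [P, Polynomial.coeff_X, Polynomial.coeff_X_pow]
    rw [hP] at h1 h2 h4
    simp at h1 h2 h4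
    simp [← h1, ← h2, ← h4]
  have hsurj : Function.Surjective Φ := by
    refine (LinearMap.injective_iff_surjective_of_finrank_eq_finrank ?_).1 hinj
    simp [Module.finrank_linearMap, hU, hK]
  obtain ⟨p, hp⟩ := hsurj (LinearMap.snd _ _ _ ∘ₗ U.subtype)
  refine ⟨p.1, p.2.1, p.2.2, fun w hw => ?_⟩
  have := LinearMap.congr_fun hp ⟨w, hw⟩
  rw [hΦ] at this
  exact this.symm

theorem exists_lines [CharP K 2] (hK : Nat.card K = 32) :
    ∃ T : Finset (K × K), T.card ≤ 155 ∧
      ∀ x y : K, x ≠ 0 → y ≠ 0 → x ≠ y → ∃ p ∈ T, p.1 * p.2 * (p.1 + p.2) = x * y * (x + y) ∧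
        ({x, y} : Set K) ⊆ {p.1, p.2, p.1 + p.2} := by
  classical
  have : Finite K := Nat.finite_of_card_ne_zero (by omega)
  have : Fintype K := Fintype.ofFinite K
  rw [Nat.card_eq_fintype_card] at hK
  have h2 : ∀ x : K, x + x = 0 := CharTwo.add_self_eq_zero
  let F : K × K → Finset K := fun p => {p.1, p.2, p.1 + p.2}
  let P : Finset (K × K) := (Finset.univ.erase (0 : K)).offDiag
  have hPm : ∀ x y, (x, y) ∈ P ↔ x ≠ 0 ∧ y ≠ 0 ∧ x ≠ y := by
    intro x y; simp [P, Finset.mem_offDiag]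
  have hP : P.card = 930 := by
    simp [P, Finset.offDiag_card, Finset.card_erase_of_mem, hK]
  have hcard : 6 * (P.image F).card ≤ P.card := by
    apply Finset.mul_card_image_le_card
    intro b hb
    obtain ⟨⟨x, y⟩, hp, rfl⟩ := Finset.mem_image.1 hb
    obtain ⟨hx, hy, hxy⟩ := (hPm x y).1 hp
    have hs : x + y ≠ 0 := fun h => hxy (CharTwo.add_eq_zero.1 h)
    have e1 : x + (x + y) = y := by rw [← add_assoc, h2, zero_add]
    have e2 : y + (x + y) = x := by rw [add_left_comm, h2, add_zero]
    have n1 : x ≠ x + y := by simpa using hy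
    have n2 : y ≠ x + y := by simpa using hx
    have hsub : ({(x, y), (y, x), (x, x + y), (x + y, x), (y, x + y), (x + y, y)} :
        Finset (K × K)) ⊆ {a ∈ P | F a = F (x, y)} := by
      intro q hq
      simp only [Finset.mem_insert, Finset.mem_singleton] at hq
      rw [Finset.mem_filter]
      rcases hq with rfl | rfl | rfl | rfl | rfl | rfl <;>
        refine ⟨(hPm _ _).2 ⟨by assumption, by assumption, by first | assumption | exact Ne.symm (by assumption)⟩, ?_⟩ <;>
        simp only [F, add_comm y x, e1, e2, add_comm (x + y) x, add_comm (x + y) y] <;>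
        (ext z; simp only [Finset.mem_insert, Finset.mem_singleton]; tauto)
    refine le_trans ?_ (Finset.card_le_card hsub)
    rw [Finset.card_insert_of_notMem, Finset.card_insert_of_notMem, Finset.card_insert_of_notMem,
      Finset.card_insert_of_notMem, Finset.card_insert_of_notMem, Finset.card_singleton] <;>
      simp [hx, hy, hxy, Ne.symm hxy]
  have hrep : ∀ s : Finset K, ∃ p : K × K, s ∈ P.image F → p ∈ P ∧ F p = s := by
    intro s
    by_cases hs : s ∈ P.image F
    · obtain ⟨p, hp, h⟩ := Finset.mem_image.1 hs
      exact ⟨p, fun _ => ⟨hp, h⟩⟩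
    · exact ⟨0, fun h => absurd h hs⟩
  choose r hr using hrep
  refine ⟨(P.image F).image r, Finset.card_image_le.trans (by omega), ?_⟩
  intro x y hx hy hxy
  have hmem : F (x, y) ∈ P.image F := Finset.mem_image_of_mem _ ((hPm x y).2 ⟨hx, hy, hxy⟩)
  obtain ⟨hrP, hrF⟩ := hr _ hmem
  refine ⟨r (F (x, y)), Finset.mem_image_of_mem _ hmem, ?_, ?_⟩
  · have key : ∀ u v : K, (u, v) ∈ P → ∏ z ∈ F (u, v), z = u * v * (u + v) := by
      intro u v huv
      obtain ⟨hu, hv, huv⟩ := (hPm u v).1 huv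
      simp only [F]
      rw [Finset.prod_insert, Finset.prod_pair]
      · ring
      · simpa using hu
      · simp [huv, hv]
    rw [← key x y ((hPm x y).2 ⟨hx, hy, hxy⟩), ← hrF, key _ _ hrP, hrF]
  · intro z hz
    have : z ∈ F (r (F (x, y))) := by
      rw [hrF]
      rcases hz with rfl | rfl <;> simp [F]
    simpa [F] using this

/-- The 5-spaces meeting `0 × K` in the plane `ker h`. -/
noncomputable def liftSpace (x y : K) (h : K →ₗ[ZMod 2] (Fin 2 → ZMod 2)) (u v : K) :
    Submodule (ZMod 2) (K × K) :=
  Submodule.span (ZMod 2) {(x, u)} ⊔ Submodule.span (ZMod 2) {(y, v)} ⊔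
    (LinearMap.ker h).map (LinearMap.inr (ZMod 2) K K)

theorem finrank_liftSpace (hK : finrank (ZMod 2) K = 5) (x y : K)
    (h : K →ₗ[ZMod 2] (Fin 2 → ZMod 2)) (hs : Function.Surjective h) (u v : K) :
    finrank (ZMod 2) (liftSpace x y h u v) ≤ 5 := by
  have h1 := Submodule.finrank_add_le_finrank_add_finrank (Submodule.span (ZMod 2) {(x, u)} ⊔ Submodule.span (ZMod 2) {(y, v)})
    ((LinearMap.ker h).map (LinearMap.inr (ZMod 2) K K))
  have h2 := Submodule.finrank_add_le_finrank_add_finrank (Submodule.span (ZMod 2) {(x, u)}) (Submodule.span (ZMod 2) {(y, v)})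
  have h3 := finrank_single_le (x, u)
  have h4 := finrank_single_le (y, v)
  have h5 := Submodule.finrank_map_le (LinearMap.inr (ZMod 2) K K) (LinearMap.ker h)
  have h6 := LinearMap.finrank_range_add_finrank_ker h
  rw [LinearMap.range_eq_top.2 hs, finrank_top, hK] at h6
  simp at h6
  unfold liftSpace
  omega

/-- If `U` projects into the line `⟨x, y⟩` and `U ∩ (0 × K) ⊆ ker h`, a lift contains it. -/
theorem le_liftSpace (x y : K)
    (h : K →ₗ[ZMod 2] (Fin 2 → ZMod 2)) (g : (Fin 2 → ZMod 2) → K) (hg : ∀ p, h (g p) = p)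
    (U : Submodule (ZMod 2) (K × K))
    (h1 : ∀ w ∈ U, ∃ s t : ZMod 2, w.1 = s • x + t • y)
    (h2 : ∀ w ∈ U, w.1 = 0 → h w.2 = 0) :
    ∃ p q, U ≤ liftSpace x y h (g p) (g q) := by
  let f1 : U →ₗ[ZMod 2] K := LinearMap.fst _ _ _ ∘ₗ U.subtype
  let f2 : U →ₗ[ZMod 2] (Fin 2 → ZMod 2) := h ∘ₗ LinearMap.snd _ _ _ ∘ₗ U.subtype
  obtain ⟨ψ, hψ⟩ : ∃ ψ : K →ₗ[ZMod 2] (Fin 2 → ZMod 2), ∀ w : U, ψ (f1 w) = f2 w := by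
    let f3 : (U ⧸ LinearMap.ker f1) →ₗ[ZMod 2] (Fin 2 → ZMod 2) :=
      (LinearMap.ker f1).liftQ f2 (fun w hw => h2 w.1 w.2 hw)
    obtain ⟨ψ, hψ⟩ := LinearMap.exists_extend (f3 ∘ₗ f1.quotKerEquivRange.symm.toLinearMap)
    refine ⟨ψ, fun w => ?_⟩
    have := LinearMap.congr_fun hψ (f1.rangeRestrict w)
    have e : f1.quotKerEquivRange.symm (f1.rangeRestrict w) = Submodule.Quotient.mk w := by
      rw [LinearEquiv.symm_apply_eq]; rfl
    simp only [LinearMap.comp_apply, LinearEquiv.coe_coe, e] at this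
    exact this
  refine ⟨ψ x, ψ y, fun w hw => ?_⟩
  obtain ⟨s, t, hst⟩ := h1 w hw
  have hk : h (w.2 - s • g (ψ x) - t • g (ψ y)) = 0 := by
    have e := hψ ⟨w, hw⟩
    change ψ w.1 = h w.2 at e
    rw [hst] at e
    simp only [map_sub, map_smul, hg, ← e, map_add]
    abel
  have e : w = s • (x, g (ψ x)) + t • (y, g (ψ y)) +
      LinearMap.inr (ZMod 2) K K (w.2 - s • g (ψ x) - t • g (ψ y)) := by
    ext
    · simp [hst]
    · simp
  rw [e]
  unfold liftSpace
  refine Submodule.add_mem_sup (Submodule.add_mem_sup ?_ ?_) ?_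
  · exact Submodule.smul_mem _ _ (Submodule.mem_span_singleton_self _)
  · exact Submodule.smul_mem _ _ (Submodule.mem_span_singleton_self _)
  · exact Submodule.mem_map_of_mem hk

/-- The image of `y ↦ Q y (Q + y)` is a hyperplane, hence meets every plane. -/
theorem exists_blocking [CharP K 2] (hK : finrank (ZMod 2) K = 5) (Q : K) (hQ : Q ≠ 0)
    (m : Submodule (ZMod 2) K) (hm : finrank (ZMod 2) m = 2) :
    ∃ y, Q * y * (Q + y) ∈ m ∧ Q * y * (Q + y) ≠ 0 := by
  let B : K →ₗ[ZMod 2] K := AddMonoidHom.toZModLinearMap 2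
    { toFun := fun y => Q * y * (Q + y)
      map_zero' := by simp
      map_add' := fun x y => by
        have h2 : (2 : K) = 0 := CharTwo.two_eq_zero
        linear_combination Q * x * y * h2 }
  have hB : ∀ y, B y = Q * y * (Q + y) := fun y => rfl
  have hker : LinearMap.ker B ≤ Submodule.span (ZMod 2) {Q} := by
    intro y hy
    rw [LinearMap.mem_ker, hB] at hy
    rcases mul_eq_zero.1 hy with h | h
    · rcases mul_eq_zero.1 h with h | h
      · exact absurd h hQ
      · rw [h]; exact Submodule.zero_mem _
    · rw [← CharTwo.add_eq_zero.1 h]; exact Submodule.mem_span_singleton_self _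
  have h1 := Submodule.finrank_mono hker
  rw [finrank_span_singleton hQ] at h1
  have h2 := LinearMap.finrank_range_add_finrank_ker B
  have h3 := Submodule.finrank_sup_add_finrank_inf_eq (LinearMap.range B) m
  have h4 := Submodule.finrank_le (LinearMap.range B ⊔ m)
  have h5 : LinearMap.range B ⊓ m ≠ ⊥ := by
    intro h
    rw [h, finrank_bot] at h3
    omega
  obtain ⟨z, ⟨⟨y, rfl⟩, hz⟩, hz0⟩ := Submodule.exists_mem_ne_zero_of_ne_bot h5
  exact ⟨y, hz, hz0⟩

/-- The 3-spaces that meet `0 × K` nontrivially but are not contained in it. -/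
theorem exists_line_for [CharP K 2] (hK : finrank (ZMod 2) K = 5)
    (U : Submodule (ZMod 2) (K × K)) (hU : finrank (ZMod 2) U = 3)
    (hA : ¬ ∀ w ∈ U, w.1 = 0 → w = 0) (hB : ¬ ∀ w ∈ U, w.1 = 0) :
    ∃ x y : K, x ≠ 0 ∧ y ≠ 0 ∧ x ≠ y ∧ (∀ w ∈ U, w.1 ∈ Submodule.span (ZMod 2) {x, y}) ∧
      ∃ b : K, ∀ w ∈ U, w.1 = 0 → w.2 ∈ Submodule.span (ZMod 2) {x * y * (x + y), b} := by
  push Not at hA hB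
  obtain ⟨w0, hw0U, hw01, hw0⟩ := hA
  obtain ⟨w1, hw1U, hw1⟩ := hB
  let f1 : U →ₗ[ZMod 2] K := LinearMap.fst _ _ _ ∘ₗ U.subtype
  have hf1 : ∀ w : U, f1 w = w.1.1 := fun w => rfl
  have hrn := LinearMap.finrank_range_add_finrank_ker f1
  rw [hU] at hrn
  let k0 : LinearMap.ker f1 := ⟨⟨w0, hw0U⟩, hw01⟩
  have hk0 : k0 ≠ 0 := by
    intro h
    exact hw0 (congrArg (fun z : LinearMap.ker f1 => z.1.1) h)
  let r1 : LinearMap.range f1 := ⟨w1.1, ⟨w1, hw1U⟩, rfl⟩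
  have hr1 : r1 ≠ 0 := by
    intro h
    exact hw1 (congrArg (fun z : LinearMap.range f1 => z.1) h)
  have hkpos : 0 < finrank (ZMod 2) (LinearMap.ker f1) := finrank_pos_iff_exists_ne_zero.2 ⟨k0, hk0⟩
  have hrpos : 0 < finrank (ZMod 2) (LinearMap.range f1) :=
    finrank_pos_iff_exists_ne_zero.2 ⟨r1, hr1⟩
  have hcases : (finrank (ZMod 2) (LinearMap.range f1) = 2 ∧ finrank (ZMod 2) (LinearMap.ker f1) = 1)
    ∨ (finrank (ZMod 2) (LinearMap.range f1) = 1 ∧ finrank (ZMod 2) (LinearMap.ker f1) = 2) := by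
    omega
  rcases hcases with ⟨hr, hk⟩ | ⟨hr, hk⟩
  · obtain ⟨r2, hr2, hne, hsp⟩ := complete_pair hr r1 hr1
    refine ⟨r1.1, r2.1, hw1, by simpa using hr2, fun h => hne (Subtype.ext h), ?_, w0.2, ?_⟩
    · intro w hw
      obtain ⟨s, t, hst⟩ := hsp ⟨w.1, ⟨w, hw⟩, rfl⟩
      rw [Submodule.mem_span_pair]
      exact ⟨s, t, congrArg Subtype.val hst⟩
    · intro w hw hw1
      obtain ⟨c, hc⟩ := (finrank_eq_one_iff_of_nonzero' k0 hk0).1 hk ⟨⟨w, hw⟩, hw1⟩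
      rw [Submodule.mem_span_pair]
      refine ⟨0, c, ?_⟩
      have := congrArg (fun z : LinearMap.ker f1 => z.1.1.2) hc
      simpa [k0] using this
  · let g : LinearMap.ker f1 →ₗ[ZMod 2] K :=
      LinearMap.snd _ _ _ ∘ₗ U.subtype ∘ₗ (LinearMap.ker f1).subtype
    have hg : Function.Injective g := by
      rw [injective_iff_map_eq_zero]
      rintro ⟨⟨⟨z1, z2⟩, hz⟩, hz1⟩ h
      have e1 : z1 = 0 := hz1
      have e2 : z2 = 0 := h
      subst e1 e2
      rfl
    have hm : finrank (ZMod 2) (LinearMap.range g) = 2 := by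
      rw [LinearMap.finrank_range_of_inj hg, hk]
    obtain ⟨y, hy, hy0⟩ := exists_blocking hK w1.1 hw1 _ hm
    obtain ⟨b, -, -, hb⟩ := complete_pair hm ⟨_, hy⟩ (by simpa [Subtype.ext_iff] using hy0)
    refine ⟨w1.1, y, hw1, ?_, ?_, ?_, b.1, ?_⟩
    · rintro rfl; simp at hy0
    · rintro h
      rw [← h, CharTwo.add_self_eq_zero] at hy0
      simp at hy0
    · intro w hw
      obtain ⟨c, hc⟩ := (finrank_eq_one_iff_of_nonzero' r1 hr1).1 hr ⟨w.1, ⟨w, hw⟩, rfl⟩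
      rw [Submodule.mem_span_pair]
      refine ⟨c, 0, ?_⟩
      have := congrArg Subtype.val hc
      simpa [r1] using this
    · intro w hw hw1
      obtain ⟨s, t, hst⟩ := hb ⟨w.2, ⟨⟨⟨w, hw⟩, hw1⟩, rfl⟩⟩
      rw [Submodule.mem_span_pair]
      exact ⟨s, t, congrArg Subtype.val hst⟩

/-- The graph of `x ↦ a x + b x^2 + c x^4`. -/
noncomputable def graphSpace [CharP K 2] (a b c : K) : Submodule (ZMod 2) (K × K) :=
  LinearMap.range (AddMonoidHom.toZModLinearMap 2
    ({ toFun := fun x => (x, a * x + b * x ^ 2 + c * x ^ 4)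
       map_zero' := by simp
       map_add' := fun x y => by
        have h2 : (2 : K) = 0 := CharTwo.two_eq_zero
        ext
        · rfl
        · simp only [Prod.snd_add]
          linear_combination (b * x * y +
            c * (2 * x ^ 3 * y + 3 * x ^ 2 * y ^ 2 + 2 * x * y ^ 3)) * h2 } : K →+ K × K))

theorem main_bound [CharP K 2] (hK : finrank (ZMod 2) K = 5) :
    coveringNumber (ZMod 2) 10 5 3 ≤ 45230 := by
  classical
  have : Finite K := Module.finite_of_finite (ZMod 2)
  have : Fintype K := Fintype.ofFinite K
  have hcard : Fintype.card K = 32 := by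
    rw [Module.card_eq_pow_finrank (K := ZMod 2), hK]; simp
  obtain ⟨T, hT, hTc⟩ := exists_lines (K := K) (by rw [Nat.card_eq_fintype_card, hcard])
  choose h hs ha hcov using exists_spread hK
  choose g hg using hs
  let I := (K × K × K) ⊕ ((T × Fin 5 × (Fin 2 → ZMod 2) × (Fin 2 → ZMod 2)) ⊕ Unit)
  let B : T → K := fun p => p.1.1 * p.1.2 * (p.1.1 + p.1.2)
  let W : I → Submodule (ZMod 2) (K × K) := Sum.elim (fun p => graphSpace p.1 p.2.1 p.2.2)
    (Sum.elim (fun q => liftSpace q.1.1.1 q.1.1.2 (h (B q.1) q.2.1) (g (B q.1) q.2.1 q.2.2.1)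
      (g (B q.1) q.2.1 q.2.2.2)) (fun _ => LinearMap.range (LinearMap.inr (ZMod 2) K K)))
  have hI : Fintype.card I ≤ 45230 := by
    simp only [I, Fintype.card_sum, Fintype.card_prod, hcard, Fintype.card_coe, Fintype.card_fin,
      Fintype.card_fun, ZMod.card, Fintype.card_unit]
    omega
  refine bound_of_family (V := K × K) (by simp [hK]) 45230 hI W ?_ ?_
  · rintro (p | q | u)
    · exact (LinearMap.finrank_range_le _).trans hK.le
    · exact finrank_liftSpace hK _ _ _ (fun p => ⟨_, hg _ _ p⟩) _ _
    · exact (LinearMap.finrank_range_le _).trans hK.le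
  · intro U hU
    by_cases hA : ∀ w ∈ U, w.1 = 0 → w = 0
    · obtain ⟨a, b, c, habc⟩ := exists_interpolation hK U hU hA
      exact ⟨Sum.inl (a, b, c), fun w hw => ⟨w.1, Prod.ext rfl (habc w hw).symm⟩⟩
    by_cases hB : ∀ w ∈ U, w.1 = 0
    · exact ⟨Sum.inr (Sum.inr ()), fun w hw => ⟨w.2, Prod.ext (hB w hw).symm rfl⟩⟩
    obtain ⟨x, y, hx, hy, hxy, hL, b, hb⟩ := exists_line_for hK U hU hA hB
    obtain ⟨p, hpT, hpB, hpL⟩ := hTc x y hx hy hxy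
    obtain ⟨i, hi⟩ := hcov (B ⟨p, hpT⟩) b
    have hsp : Submodule.span (ZMod 2) {x, y} ≤ Submodule.span (ZMod 2) {p.1, p.2} := by
      rw [Submodule.span_le]
      refine hpL.trans ?_
      have m1 : p.1 ∈ Submodule.span (ZMod 2) {p.1, p.2} := Submodule.subset_span (by simp)
      have m2 : p.2 ∈ Submodule.span (ZMod 2) {p.1, p.2} := Submodule.subset_span (by simp)
      rintro z (rfl | rfl | rfl)
      · exact m1
      · exact m2
      · exact Submodule.add_mem _ m1 m2
    obtain ⟨u, v, huv⟩ := le_liftSpace p.1 p.2 (h (B ⟨p, hpT⟩) i) (g (B ⟨p, hpT⟩) i) (hg _ _) U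
      (fun w hw => by
        obtain ⟨s, t, hst⟩ := Submodule.mem_span_pair.1 (hsp (hL w hw))
        exact ⟨s, t, hst.symm⟩)
      (fun w hw hw1 => by
        obtain ⟨s, t, hst⟩ := Submodule.mem_span_pair.1 (hb w hw hw1)
        have := ha (B ⟨p, hpT⟩) i
        rw [← hst, ← hpB, map_add, map_smul, map_smul, hi]
        change s • h _ i (B ⟨p, hpT⟩) + _ = _
        rw [this]; simp)
    exact ⟨Sum.inr (Sum.inl (⟨p, hpT⟩, i, u, v)), huv⟩

end field

/-- $\mathcal{C}_2(10,5,3) \le 45230$. -/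
theorem bound_10_5_3 : coveringNumber (ZMod 2) 10 5 3 ≤ 45230 := by
  exact main_bound (K := GaloisField 2 5) (GaloisField.finrank 2 (by norm_num))
end
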